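/- Let T be a tree of order n ≥ 4. If 2·γnt(T) = n, then T belongs to the family 𝒯, i.e., T can be constructed as follows: there exist a tree T0 and a tree T1 obtained from T0 by, for each vertex x of T0, either adding one new vertex joined to x or adding a new path on three vertices and joining its central vertex to x; and T is obtained from T1 by choosing a set L1 of leaves of T1 forming a 2-packing of T1 (possibly empty) and, for each v ∈ L1, adding some number k ≥ 0 (depending on v) of vertex-disjoint new copies of the path P2 and joining v to exactly one end of each added copy. -/

import Mathlib

open SimpleGraph

variable {V : Type*}

/-- The open neighborhood `N(S)` of a set `S` of vertices: all vertices having a neighbor in `S`. -/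
def openNbhd (G : SimpleGraph V) (S : Set V) : Set V := {v | ∃ u ∈ S, G.Adj u v}

/-- `S` is a dominating set: every vertex not in `S` has a neighbor in `S`. -/
def IsDomSet (G : SimpleGraph V) (S : Set V) : Prop := ∀ v ∉ S, ∃ u ∈ S, G.Adj u v

/-- `S` is a total dominating set: every vertex has a neighbor in `S`. -/
def IsTotalDomSet (G : SimpleGraph V) (S : Set V) : Prop := ∀ v, ∃ u ∈ S, G.Adj u v

/-- `S` is a neighborhood total dominating set: a dominating set such that the subgraph
induced by the open neighborhood `N(S)` has no isolated vertex. -/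
def IsNTDSet (G : SimpleGraph V) (S : Set V) : Prop :=
  IsDomSet G S ∧ ∀ v ∈ openNbhd G S, ∃ u ∈ openNbhd G S, G.Adj v u

/-- The domination number `γ(G)`. -/
noncomputable def domNum (G : SimpleGraph V) : ℕ :=
  sInf {n | ∃ S : Set V, IsDomSet G S ∧ S.ncard = n}

/-- The total domination number `γt(G)`. -/
noncomputable def totalDomNum (G : SimpleGraph V) : ℕ :=
  sInf {n | ∃ S : Set V, IsTotalDomSet G S ∧ S.ncard = n}

/-- The neighborhood total domination number `γnt(G)`. -/
noncomputable def ntdNum (G : SimpleGraph V) : ℕ :=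
  sInf {n | ∃ S : Set V, IsNTDSet G S ∧ S.ncard = n}

section FamilyT

variable {α : Type*}

/-- A vertex is a leaf if it has exactly one neighbor. -/
def IsLeafVertex (G : SimpleGraph V) (v : V) : Prop := ∃! u, G.Adj v u

/-- The new vertices added to a vertex `x` of `T0` when forming the base tree `T1`:
if `unit x = false` (a `P2`-unit), a single new vertex `(x, 0)` is added and joined to `x`;
if `unit x = true` (a star-unit), a new path on the three vertices `(x, 1), (x, 0), (x, 2)`,
with central vertex `(x, 0)`, is added and `(x, 0)` is joined to `x`. -/
def UnitVerts (unit : α → Bool) : Type _ :=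
  {p : α × Fin 3 // unit p.1 = true ∨ p.2 = 0}

/-- The vertex type of the base tree `T1`. -/
abbrev BaseVerts (unit : α → Bool) : Type _ := α ⊕ UnitVerts unit

/-- The base tree `T1` obtained from the tree `T0` by, for each vertex `x` of `T0`, either
adding one new vertex joined to `x` (when `unit x = false`) or adding a new path on three
vertices and joining its central vertex to `x` (when `unit x = true`). -/
def baseTree (T0 : SimpleGraph α) (unit : α → Bool) : SimpleGraph (BaseVerts unit) :=
  SimpleGraph.fromRel (fun a b =>
    (∃ x y : α, a = Sum.inl x ∧ b = Sum.inl y ∧ T0.Adj x y) ∨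
    (∃ (x : α) (u : UnitVerts unit),
        a = Sum.inl x ∧ b = Sum.inr u ∧ u.1.1 = x ∧ u.1.2 = 0) ∨
    (∃ u w : UnitVerts unit,
        a = Sum.inr u ∧ b = Sum.inr w ∧ u.1.1 = w.1.1 ∧ u.1.2 = 0 ∧ w.1.2 ≠ 0))

/-- The vertices of the appended copies of `P2`: for each vertex `v` of `T1` and each
`i < k v`, a new copy of `P2` consisting of the vertex `(v, i, 0)` (which is joined to `v`)
and the vertex `(v, i, 1)`. -/
def AppendVerts (unit : α → Bool) (k : BaseVerts unit → ℕ) : Type _ :=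
  {t : BaseVerts unit × ℕ × Fin 2 // t.2.1 < k t.1}

/-- The vertex type of the final tree. -/
abbrev FullVerts (unit : α → Bool) (k : BaseVerts unit → ℕ) : Type _ :=
  BaseVerts unit ⊕ AppendVerts unit k

/-- The tree obtained from the base tree `T1 = baseTree T0 unit` by appending, for each
vertex `v` of `T1`, `k v` vertex-disjoint new copies of `P2`, joining `v` to exactly one end
of each copy. -/
def fullTree (T0 : SimpleGraph α) (unit : α → Bool) (k : BaseVerts unit → ℕ) :
    SimpleGraph (FullVerts unit k) :=
  SimpleGraph.fromRel (fun a b =>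
    (∃ v w : BaseVerts unit, a = Sum.inl v ∧ b = Sum.inl w ∧ (baseTree T0 unit).Adj v w) ∨
    (∃ (v : BaseVerts unit) (t : AppendVerts unit k),
        a = Sum.inl v ∧ b = Sum.inr t ∧ t.1.1 = v ∧ t.1.2.2 = 0) ∨
    (∃ t s : AppendVerts unit k, a = Sum.inr t ∧ b = Sum.inr s ∧ t.1.1 = s.1.1 ∧
        t.1.2.1 = s.1.2.1 ∧ t.1.2.2 = 0 ∧ s.1.2.2 = 1))

end FamilyT


namespace NTDAux

open Classical in
/-- Rooted subtrees built by hanging one rooted subtree below the root of another one. -/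
inductive Built {V : Type*} (T : SimpleGraph V) : Finset V → V → Prop
  | single (r : V) : Built T {r} r
  | join (W1 W2 : Finset V) (r c : V) : Built T W1 r → Built T W2 c → Disjoint W1 W2 →
      T.Adj r c → (∀ a ∈ W1, ∀ b ∈ W2, T.Adj a b → a = r ∧ b = c) → Built T (W1 ∪ W2) r

theorem Built.mem {V : Type*} {T : SimpleGraph V} {W : Finset V} {r : V} (h : Built T W r) :
    r ∈ W := by
  induction h with
  | single r => simp
  | join W1 W2 r c _ _ _ _ _ ih1 _ => simp [ih1]

/-- Cut formulation of connectedness of a vertex set. -/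
def CutConn {V : Type*} (T : SimpleGraph V) (W : Finset V) : Prop :=
  ∀ U : Set V, (∃ a ∈ W, a ∈ U) → (∃ b ∈ W, b ∉ U) → ∃ a ∈ W, ∃ b ∈ W, a ∈ U ∧ b ∉ U ∧ T.Adj a b

theorem cutConn_part {V : Type*} {T : SimpleGraph V} {W W1 W2 : Finset V} (hW : CutConn T W)
    (hsub : ∀ v, v ∈ W ↔ v ∈ W1 ∨ v ∈ W2)
    (c : V) (hc : c ∈ W2) (hdis : ∀ v ∈ W1, v ∉ W2)
    (hcut : ∀ a ∈ W1, ∀ b ∈ W2, T.Adj a b → b = c) : CutConn T W2 := by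
  intro U ⟨a, ha, haU⟩ ⟨b, hb, hbU⟩
  by_cases hcU : c ∈ U
  · obtain ⟨p, hp, q, hq, hpU, hqU, hpq⟩ := hW {v | v ∈ W2 ∧ v ∉ U}
      ⟨b, (hsub b).2 (Or.inr hb), hb, hbU⟩ ⟨c, (hsub c).2 (Or.inr hc), fun h => h.2 hcU⟩
    by_cases hq2 : q ∈ W2
    · have : q ∈ U := by
        by_contra hh
        exact hqU ⟨hq2, hh⟩
      exact ⟨q, hq2, p, hpU.1, this, hpU.2, hpq.symm⟩
    · have hq1 : q ∈ W1 := by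
        rcases (hsub q).1 hq with h | h
        · exact h
        · exact absurd h hq2
      have := hcut q hq1 p hpU.1 hpq.symm
      exact absurd hcU (this ▸ hpU.2)
  · obtain ⟨p, hp, q, hq, hpU, hqU, hpq⟩ := hW {v | v ∈ W2 ∧ v ∈ U}
      ⟨a, (hsub a).2 (Or.inr ha), ha, haU⟩ ⟨c, (hsub c).2 (Or.inr hc), fun h => hcU h.2⟩
    by_cases hq2 : q ∈ W2
    · exact ⟨p, hpU.1, q, hq2, hpU.2, fun hh => hqU ⟨hq2, hh⟩, hpq⟩
    · have hq1 : q ∈ W1 := by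
        rcases (hsub q).1 hq with h | h
        · exact h
        · exact absurd h hq2
      have := hcut q hq1 p hpU.1 hpq.symm
      exact absurd (this ▸ hpU.2) hcU

open Classical in
theorem built_of_cutConn {V : Type*} {T : SimpleGraph V} (hT : T.IsAcyclic) :
    ∀ (n : ℕ) (W : Finset V) (r : V), W.card ≤ n → r ∈ W → CutConn T W → Built T W r := by
  intro n
  induction n with
  | zero =>
    intro W r hn hr
    have : W = ∅ := by simpa using hn
    simp [this] at hr
  | succ n ih =>
    intro W r hn hr hW
    by_cases hne : ∃ b ∈ W, b ≠ r
    · obtain ⟨b, hb, hbr⟩ := hne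
      obtain ⟨a, ha, c, hc, har, hcr, hac⟩ := hW {r} ⟨r, hr, rfl⟩ ⟨b, hb, hbr⟩
      have har : a = r := har
      subst har
      have hbr := (isAcyclic_iff_forall_adj_isBridge.1 hT) hac
      have hnr : ¬ (T.deleteEdges {s(a, c)}).Reachable a c := by
        have := (isBridge_iff.1 hbr)
        first | exact this.2 | exact this
      let T' := T.deleteEdges {s(a, c)}
      let W2 := W.filter (fun v => T'.Reachable v c)
      let W1 := W.filter (fun v => ¬ T'.Reachable v c)
      have hsub : ∀ v, v ∈ W ↔ v ∈ W1 ∨ v ∈ W2 := by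
        intro v; simp only [W1, W2, Finset.mem_filter]; tauto
      have hdis : ∀ v ∈ W1, v ∉ W2 := by
        intro v; simp only [W1, W2, Finset.mem_filter]; tauto
      have ha1 : a ∈ W1 := by simp only [W1, Finset.mem_filter]; exact ⟨ha, hnr⟩
      have hc2 : c ∈ W2 := by
        simp only [W2, Finset.mem_filter]; exact ⟨hc, Reachable.refl _⟩
      have hcut : ∀ p ∈ W1, ∀ q ∈ W2, T.Adj p q → p = a ∧ q = c := by
        intro p hp q hq hpq
        by_cases he : s(p, q) = s(a, c)
        · rcases Sym2.eq_iff.1 he with h | h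
          · exact h
          · exact absurd (h.1 ▸ hc2) (hdis p hp)
        · exfalso
          have hadj : T'.Adj p q := by
            simp only [T', deleteEdges_adj]
            exact ⟨hpq, by simpa using he⟩
          simp only [W1, W2, Finset.mem_filter] at hp hq
          exact hp.2 (hadj.reachable.trans hq.2)
      have hWu : W = W1 ∪ W2 := by ext v; simp [hsub v]
      have hd : Disjoint W1 W2 := Finset.disjoint_left.2 (fun {v} h => hdis v h)
      have hcard : W.card = W1.card + W2.card := by
        conv_lhs => rw [hWu]
        exact Finset.card_union_of_disjoint hd
      have h1 : 0 < W1.card := Finset.card_pos.2 ⟨a, ha1⟩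
      have h2 : 0 < W2.card := Finset.card_pos.2 ⟨c, hc2⟩
      have c2 : CutConn T W2 := cutConn_part hW hsub c hc2 hdis (fun p hp q hq h => (hcut p hp q hq h).2)
      have c1 : CutConn T W1 := cutConn_part (W1 := W2) (W2 := W1) hW (fun v => (hsub v).trans or_comm) a ha1
        (fun v h h' => hdis v h' h) (fun p hp q hq h => (hcut q hq p hp h.symm).1)
      rw [hWu]
      exact Built.join W1 W2 a c (ih W1 a (by omega) ha1 c1) (ih W2 c (by omega) hc2 c2) hd hac hcut
    · push Not at hne
      have : W = {r} := by
        ext v; simp only [Finset.mem_singleton]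
        exact ⟨hne v, fun h => h ▸ hr⟩
      rw [this]
      exact Built.single r

theorem cutConn_univ {V : Type*} [Fintype V] {T : SimpleGraph V} (hT : T.Connected) :
    CutConn T Finset.univ := by
  intro U ⟨a, _, ha⟩ ⟨b, _, hb⟩
  obtain ⟨w⟩ := hT.preconnected a b
  obtain ⟨d, -, hd1, hd2⟩ := w.exists_boundary_dart U ha hb
  exact ⟨d.fst, Finset.mem_univ _, d.snd, Finset.mem_univ _, hd1, hd2, d.adj⟩

theorem built_univ {V : Type*} [Fintype V] {T : SimpleGraph V} (hT : T.IsTree) (r : V) :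
    Built T Finset.univ r :=
  built_of_cutConn hT.isAcyclic _ _ r le_rfl (Finset.mem_univ _) (cutConn_univ hT.1)

/-- Partial neighborhood total dominating sets of the rooted piece `(W, r)`.  `S` is the set and `M`
a set of vertices claimed to lie in `N(S)`; `s`, `m` record membership of the root and `a`, `b`
say that the requirements of the root are already met inside `W`. -/
def NP {V : Type*} (T : SimpleGraph V) (W : Finset V) (r : V) (s m a b : Bool) (e : ℕ) : Prop :=
  ∃ (S : Finset V) (M : Set V), S ⊆ W ∧ (∀ v ∈ W, v ∈ S ∨ v ∈ M) ∧
    (∀ v ∈ W, v ≠ r → v ∈ M → ∃ u ∈ W, T.Adj v u ∧ u ∈ S) ∧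
    (∀ v ∈ W, v ≠ r → v ∉ S → ∃ u ∈ W, T.Adj v u ∧ u ∈ M) ∧
    (r ∈ S ↔ s = true) ∧ (r ∈ M ↔ m = true) ∧
    (a = true → r ∈ M → ∃ u ∈ W, T.Adj r u ∧ u ∈ S) ∧
    (b = true → r ∉ S → ∃ u ∈ W, T.Adj r u ∧ u ∈ M) ∧
    2 * S.card + 3 ≤ W.card + e

open Classical in
theorem NP.join {V : Type*} {T : SimpleGraph V} {W1 W2 : Finset V} {r c : V}
    {s m a b s' m' a' b' : Bool} {e1 e2 e : ℕ}
    (h1 : NP T W1 r s m a b e1) (h2 : NP T W2 c s' m' a' b' e2)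
    (hr : r ∈ W1) (hc : c ∈ W2)
    (hd : Disjoint W1 W2) (hadj : T.Adj r c)
    (ha' : (a' || s) = true) (hb' : (b' || m) = true) (he : e1 + e2 ≤ e + 3) :
    NP T (W1 ∪ W2) r s m (a || s') (b || m') e := by
  obtain ⟨S1, M1, hS1, dom1, nM1, nS1, rs1, rm1, ra1, rb1, card1⟩ := h1
  obtain ⟨S2, M2, hS2, dom2, nM2, nS2, rs2, rm2, ra2, rb2, card2⟩ := h2
  have hd1 : ∀ v, v ∈ W1 → v ∉ W2 := fun v h h' => Finset.disjoint_left.1 hd h h'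
  have hS12 : ∀ v, v ∈ W1 → v ∉ S2 := fun v h h' => hd1 v h (hS2 h')
  have hS21 : ∀ v, v ∈ W2 → v ∉ S1 := fun v h h' => hd1 v (hS1 h') h
  have hrc : ∀ v, v ∈ W2 → v ≠ r := fun v h h' => hd1 v (h' ▸ hr) h
  refine ⟨S1 ∪ S2, {v | v ∈ W1 ∧ v ∈ M1 ∨ v ∈ W2 ∧ v ∈ M2}, Finset.union_subset_union hS1 hS2,
    ?_, ?_, ?_, ?_, ?_, ?_, ?_, ?_⟩
  · intro v hv
    simp only [Finset.mem_union, Set.mem_ofPred_eq] at hv ⊢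
    rcases hv with hv | hv
    · rcases dom1 v hv with h | h
      · exact Or.inl (Or.inl h)
      · exact Or.inr (Or.inl ⟨hv, h⟩)
    · rcases dom2 v hv with h | h
      · exact Or.inl (Or.inr h)
      · exact Or.inr (Or.inr ⟨hv, h⟩)
  · intro v hv hvr hvM
    simp only [Finset.mem_union, Set.mem_ofPred_eq] at hv hvM ⊢
    rcases hvM with ⟨hv1, hvM⟩ | ⟨hv2, hvM⟩
    · obtain ⟨u, hu, h, h'⟩ := nM1 v hv1 hvr hvM
      exact ⟨u, Or.inl hu, h, Or.inl h'⟩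
    · by_cases hvc : v = c
      · subst hvc
        rcases (Bool.or_eq_true _ _).mp ha' with h | h
        · obtain ⟨u, hu, h, h'⟩ := ra2 h hvM
          exact ⟨u, Or.inr hu, h, Or.inr h'⟩
        · exact ⟨r, Or.inl hr, hadj.symm, Or.inl (rs1.2 h)⟩
      · obtain ⟨u, hu, h, h'⟩ := nM2 v hv2 hvc hvM
        exact ⟨u, Or.inr hu, h, Or.inr h'⟩
  · intro v hv hvr hvS
    simp only [Finset.mem_union, Set.mem_ofPred_eq, not_or] at hv hvS ⊢
    rcases hv with hv1 | hv2
    · obtain ⟨u, hu, h, h'⟩ := nS1 v hv1 hvr hvS.1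
      exact ⟨u, Or.inl hu, h, Or.inl ⟨hu, h'⟩⟩
    · by_cases hvc : v = c
      · subst hvc
        rcases (Bool.or_eq_true _ _).mp hb' with h | h
        · obtain ⟨u, hu, h, h'⟩ := rb2 h hvS.2
          exact ⟨u, Or.inr hu, h, Or.inr ⟨hu, h'⟩⟩
        · exact ⟨r, Or.inl hr, hadj.symm, Or.inl ⟨hr, (rm1.2 h)⟩⟩
      · obtain ⟨u, hu, h, h'⟩ := nS2 v hv2 hvc hvS.2
        exact ⟨u, Or.inr hu, h, Or.inr ⟨hu, h'⟩⟩
  · rw [← rs1]; have := hS12 r hr; simp [this]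
  · rw [← rm1]; have := hd1 r hr; simp [this, hr]
  · intro h hrM
    simp only [Finset.mem_union, Set.mem_ofPred_eq] at hrM ⊢
    rcases (Bool.or_eq_true _ _).mp h with h | h
    · have hrM : r ∈ M1 := by
        rcases hrM with h | h
        · exact h.2
        · exact absurd h.1 (hd1 r hr)
      obtain ⟨u, hu, h, h'⟩ := ra1 h hrM
      exact ⟨u, Or.inl hu, h, Or.inl h'⟩
    · exact ⟨c, Or.inr hc, hadj, Or.inr (rs2.2 h)⟩
  · intro h hrS
    simp only [Finset.mem_union, Set.mem_ofPred_eq, not_or] at hrS ⊢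
    rcases (Bool.or_eq_true _ _).mp h with h | h
    · obtain ⟨u, hu, h, h'⟩ := rb1 h hrS.1
      exact ⟨u, Or.inl hu, h, Or.inl ⟨hu, h'⟩⟩
    · exact ⟨c, Or.inr hc, hadj, Or.inr ⟨hc, (rm2.2 h)⟩⟩
  · rw [Finset.card_union_of_disjoint hd, Finset.card_union_of_disjoint (Finset.disjoint_of_subset_left hS1
      (Finset.disjoint_of_subset_right hS2 hd))]
    omega

theorem NP.single {V : Type*} {T : SimpleGraph V} (r : V) (s m a b : Bool) (e : ℕ)
    (hsm : (s || m) = true) (ha : a = true → m = false) (hb : b = true → s = true)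
    (he : 2 * (if s then 1 else 0) + 2 ≤ e) : NP T {r} r s m a b e := by
  refine ⟨if s then {r} else ∅, {v | v = r ∧ m = true}, ?_, ?_, ?_, ?_, ?_, ?_, ?_, ?_, ?_⟩ <;>
    cases s <;> cases m <;> simp_all <;> omega

/-- A complete partial solution gives an NTD-set. -/
theorem NP.final {V : Type*} [Fintype V] {T : SimpleGraph V} {r : V} {s m : Bool} {e : ℕ}
    (h : NP T Finset.univ r s m true true e) (he : e < 3) : 2 * ntdNum T < Fintype.card V := by
  obtain ⟨S, M, hS, dom, nM, nS, rs, rm, ra, rb, card⟩ := h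
  have hM : ∀ v ∈ M, ∃ u, T.Adj v u ∧ u ∈ S := by
    intro v hv
    by_cases hvr : v = r
    · subst hvr
      obtain ⟨u, -, h⟩ := ra rfl hv
      exact ⟨u, h⟩
    · obtain ⟨u, -, h⟩ := nM v (Finset.mem_univ _) hvr hv
      exact ⟨u, h⟩
  have hSS : ∀ v, v ∉ S → ∃ u, T.Adj v u ∧ u ∈ M := by
    intro v hv
    by_cases hvr : v = r
    · subst hvr
      obtain ⟨u, -, h⟩ := rb rfl hv
      exact ⟨u, h⟩
    · obtain ⟨u, -, h⟩ := nS v (Finset.mem_univ _) hvr hv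
      exact ⟨u, h⟩
  have hntd : IsNTDSet T (S : Set V) := by
    refine ⟨?_, ?_⟩
    · intro v hv
      have hvS : v ∉ S := by simpa using hv
      have hvM : v ∈ M := (dom v (Finset.mem_univ _)).resolve_left hvS
      obtain ⟨u, h1, h2⟩ := hM v hvM
      exact ⟨u, by simpa using h2, h1.symm⟩
    · intro v hv
      by_cases hvS : v ∈ S
      · obtain ⟨u, hu, huv⟩ := hv
        exact ⟨u, ⟨v, by simpa using hvS, huv.symm⟩, huv.symm⟩
      · obtain ⟨u, h1, h2⟩ := hSS v hvS
        obtain ⟨w, h3, h4⟩ := hM u h2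
        exact ⟨u, ⟨w, by simpa using h4, h3.symm⟩, h1⟩
  have : ntdNum T ≤ S.card := by
    apply Nat.sInf_le
    exact ⟨S, hntd, Set.ncard_coe_finset S⟩
  rw [Finset.card_univ] at card
  omega

/-- Labels describing the role of a vertex in the construction of the family. -/
inductive Lab
  | X0 | X1 | U | C | D0 | D1 | A | B

instance : DecidableEq Lab := fun a b => by
  cases a <;> cases b <;> first | exact isTrue rfl | exact isFalse (fun h => by cases h)

open Lab in
/-- The role that a neighbor labelled by the second label plays for a vertex labelled by the first:
`0` means forbidden, `4` unrestricted, and `1, 2, 3` are slots holding exactly one neighbor. -/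
def slot : Lab → Lab → ℕ
  | X0, U => 1
  | X0, X0 => 4
  | X0, X1 => 4
  | X1, C => 1
  | X1, X0 => 4
  | X1, X1 => 4
  | U, X0 => 1
  | U, A => 4
  | C, X1 => 1
  | C, D0 => 2
  | C, D1 => 3
  | D0, C => 1
  | D1, C => 1
  | D1, A => 4
  | A, U => 1
  | A, D1 => 1
  | A, B => 2
  | B, A => 1
  | _, _ => 0

/-- Number of slots of a label. -/
def nreq : Lab → ℕ
  | Lab.C => 3
  | Lab.A => 2
  | _ => 1

/-- Slot `i` of vertex `v` is occupied by exactly one vertex (`b = true`) or empty. -/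
def Slot {V : Type*} (T : SimpleGraph V) (W : Finset V) (f : V → Lab) (v : V) (i : ℕ) (b : Bool) :
    Prop :=
  (b = true → ∃! u, u ∈ W ∧ T.Adj v u ∧ slot (f v) (f u) = i) ∧
  (b = false → ∀ u ∈ W, T.Adj v u → slot (f v) (f u) ≠ i)

/-- Partial labellings of the rooted piece `(W, r)`. -/
def LP {V : Type*} (T : SimpleGraph V) (W : Finset V) (r : V) (l : Lab) (b1 b2 b3 : Bool) : Prop :=
  ∃ f : V → Lab, f r = l ∧ (∀ u ∈ W, ∀ v ∈ W, T.Adj u v → slot (f u) (f v) ≠ 0) ∧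
    (∀ v ∈ W, v ≠ r → ∀ i, 1 ≤ i → i ≤ nreq (f v) → Slot T W f v i true) ∧
    Slot T W f r 1 b1 ∧ Slot T W f r 2 b2 ∧ Slot T W f r 3 b3

/-- Adding a vertex playing role `j` to slot `i`. -/
def addOk (j i : ℕ) (b : Bool) : Bool := !(b && (j == i))

open Classical in
theorem Slot.same {V : Type*} {T : SimpleGraph V} {W1 W : Finset V} {f1 f : V → Lab} {v : V}
    {i : ℕ} {b : Bool} (h : Slot T W1 f1 v i b) (hv : v ∈ W1) (hf : ∀ u ∈ W1, f u = f1 u)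
    (hN : ∀ u, T.Adj v u → (u ∈ W ↔ u ∈ W1)) : Slot T W f v i b := by
  refine ⟨fun hb => ?_, fun hb u hu huv => ?_⟩
  · obtain ⟨u, ⟨hu, huv, hs⟩, huniq⟩ := h.1 hb
    refine ⟨u, ⟨(hN u huv).2 hu, huv, by rw [hf u hu, hf v hv]; exact hs⟩, ?_⟩
    rintro w ⟨hw, hvw, hws⟩
    have hw1 := (hN w hvw).1 hw
    rw [hf w hw1, hf v hv] at hws
    exact huniq w ⟨hw1, hvw, hws⟩
  · have hu1 := (hN u huv).1 hu
    rw [hf u hu1, hf v hv]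
    exact h.2 hb u hu1 huv

open Classical in
theorem Slot.add {V : Type*} {T : SimpleGraph V} {W1 W : Finset V} {f1 f : V → Lab} {v c : V}
    {i j : ℕ} {b : Bool} (h : Slot T W1 f1 v i b) (hv : v ∈ W1) (hf : ∀ u ∈ W1, f u = f1 u)
    (hc : c ∉ W1) (hvc : T.Adj v c)
    (hN : ∀ u, T.Adj v u → (u ∈ W ↔ u ∈ W1 ∨ u = c)) (hj : slot (f v) (f c) = j)
    (hok : addOk j i b = true) : Slot T W f v i (b || (j == i)) := by
  by_cases hji : j = i
  · subst hji
    have hb : b = false := by simpa [addOk] using hok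
    subst hb
    have h2 := h.2 rfl
    refine ⟨fun _ => ⟨c, ⟨(hN c hvc).2 (Or.inr rfl), hvc, hj⟩, ?_⟩, fun hh => by simp at hh⟩
    rintro w ⟨hw, hvw, hws⟩
    rcases (hN w hvw).1 hw with hw1 | hw1
    · rw [hf w hw1, hf v hv] at hws
      exact absurd hws (h2 w hw1 hvw)
    · exact hw1
  · have hbe : (b || (j == i)) = b := by simp [hji]
    rw [hbe]
    refine ⟨fun hb => ?_, fun hb u hu huv => ?_⟩
    · obtain ⟨u, ⟨hu, huv, hs⟩, huniq⟩ := h.1 hb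
      refine ⟨u, ⟨(hN u huv).2 (Or.inl hu), huv, by rw [hf u hu, hf v hv]; exact hs⟩, ?_⟩
      rintro w ⟨hw, hvw, hws⟩
      rcases (hN w hvw).1 hw with hw1 | hw1
      · rw [hf w hw1, hf v hv] at hws
        exact huniq w ⟨hw1, hvw, hws⟩
      · subst hw1
        exact absurd (hj.symm.trans hws) hji
    · rcases (hN u huv).1 hu with hu1 | hu1
      · rw [hf u hu1, hf v hv]
        exact h.2 hb u hu1 huv
      · subst hu1
        rw [hj]; exact hji

/-- Test that the state of a child is complete once it sees a parent in role `j`. -/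
def childOk (l : Lab) (j : ℕ) (b1 b2 b3 : Bool) : Bool :=
  addOk j 1 b1 && addOk j 2 b2 && addOk j 3 b3 && (b1 || (j == 1)) &&
    (b2 || (j == 2) || Nat.ble (nreq l) 1) && (b3 || (j == 3) || Nat.ble (nreq l) 2)

theorem nreq_le (l : Lab) : nreq l ≤ 3 := by cases l <;> simp [nreq]

open Classical in
theorem LP.join {V : Type*} {T : SimpleGraph V} {W1 W2 : Finset V} {r c : V}
    {l l' : Lab} {b1 b2 b3 c1 c2 c3 : Bool}
    (h1 : LP T W1 r l b1 b2 b3) (h2 : LP T W2 c l' c1 c2 c3)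
    (hr : r ∈ W1) (hc : c ∈ W2)
    (hd : Disjoint W1 W2) (hadj : T.Adj r c)
    (hcut : ∀ a ∈ W1, ∀ b ∈ W2, T.Adj a b → a = r ∧ b = c) (j j' : ℕ)
    (hj : slot l l' = j) (hj' : slot l' l = j')
    (hj0 : j ≠ 0) (hj0' : j' ≠ 0) (hchild : childOk l' j' c1 c2 c3 = true)
    (o1 : addOk j 1 b1 = true) (o2 : addOk j 2 b2 = true) (o3 : addOk j 3 b3 = true) :
    LP T (W1 ∪ W2) r l (b1 || (j == 1)) (b2 || (j == 2)) (b3 || (j == 3)) := by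
  obtain ⟨f1, fr, e1, n1, r1, r2, r3⟩ := h1
  obtain ⟨f2, fc, e2, n2, s1, s2, s3⟩ := h2
  have hd1 : ∀ v, v ∈ W1 → v ∉ W2 := fun v h h' => Finset.disjoint_left.1 hd h h'
  have hd2 : ∀ v, v ∈ W2 → v ∉ W1 := fun v h h' => hd1 v h' h
  let f : V → Lab := fun v => if v ∈ W1 then f1 v else f2 v
  have hf1 : ∀ u ∈ W1, f u = f1 u := fun u hu => by simp [f, hu]
  have hf2 : ∀ u ∈ W2, f u = f2 u := fun u hu => by simp [f, hd2 u hu]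
  have hfr : f r = l := by rw [hf1 r hr, fr]
  have hfc : f c = l' := by rw [hf2 c hc, fc]
  have hrN : ∀ u, T.Adj r u → (u ∈ W1 ∪ W2 ↔ u ∈ W1 ∨ u = c) := by
    intro u hu
    rw [Finset.mem_union]
    constructor
    · rintro (h | h)
      · exact Or.inl h
      · exact Or.inr (hcut r hr u h hu).2
    · rintro (h | h)
      · exact Or.inl h
      · exact Or.inr (h ▸ hc)
  have hcN : ∀ u, T.Adj c u → (u ∈ W1 ∪ W2 ↔ u ∈ W2 ∨ u = r) := by
    intro u hu
    rw [Finset.mem_union]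
    constructor
    · rintro (h | h)
      · exact Or.inr (hcut u h c hc hu.symm).1
      · exact Or.inl h
    · rintro (h | h)
      · exact Or.inr h
      · exact Or.inl (h ▸ hr)
  refine ⟨f, hfr, ?_, ?_, ?_, ?_, ?_⟩
  · intro u hu v hv huv
    rw [Finset.mem_union] at hu hv
    rcases hu with hu | hu <;> rcases hv with hv | hv
    · rw [hf1 u hu, hf1 v hv]; exact e1 u hu v hv huv
    · obtain ⟨rfl, rfl⟩ := hcut u hu v hv huv
      rw [hfr, hfc, hj]; exact hj0
    · obtain ⟨rfl, rfl⟩ := hcut v hv u hu huv.symm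
      rw [hfr, hfc, hj']; exact hj0'
    · rw [hf2 u hu, hf2 v hv]; exact e2 u hu v hv huv
  · intro v hv hvr i hi1 hi2
    rw [Finset.mem_union] at hv
    rcases hv with hv | hv
    · rw [hf1 v hv] at hi2
      refine (n1 v hv hvr i hi1 hi2).same hv hf1 ?_
      intro u hu
      rw [Finset.mem_union]
      constructor
      · rintro (h | h)
        · exact h
        · exact absurd (hcut v hv u h hu).1 hvr
      · exact Or.inl
    · by_cases hvc : v = c
      · subst hvc
        have hjj : slot (f v) (f r) = j' := by rw [hfr, hfc, hj']
        simp only [childOk, Bool.and_eq_true] at hchild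
        obtain ⟨⟨⟨⟨⟨k1, k2⟩, k3⟩, k4⟩, k5⟩, k6⟩ := hchild
        have t1 := s1.add hv hf2 (hd1 r hr) hadj.symm hcN hjj k1
        have t2 := s2.add hv hf2 (hd1 r hr) hadj.symm hcN hjj k2
        have t3 := s3.add hv hf2 (hd1 r hr) hadj.symm hcN hjj k3
        have h3 := nreq_le (f v)
        rw [hfc] at hi2 h3
        have hi : i = 1 ∨ i = 2 ∨ i = 3 := by omega
        rcases hi with rfl | rfl | rfl
        · rw [k4] at t1; exact t1
        · have : Nat.ble (nreq l') 1 = false := by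
            rw [← Bool.not_eq_true, Nat.ble_eq]; omega
          rw [this, Bool.or_false] at k5
          rw [k5] at t2; exact t2
        · have : Nat.ble (nreq l') 2 = false := by
            rw [← Bool.not_eq_true, Nat.ble_eq]; omega
          rw [this, Bool.or_false] at k6
          rw [k6] at t3; exact t3
      · rw [hf2 v hv] at hi2
        refine (n2 v hv hvc i hi1 hi2).same hv hf2 ?_
        intro u hu
        rw [Finset.mem_union]
        constructor
        · rintro (h | h)
          · exact absurd (hcut u h v hv hu.symm).2 hvc
          · exact h
        · exact Or.inr
  · exact r1.add hr hf1 (hd2 c hc) hadj hrN (by rw [hfr, hfc, hj]) o1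
  · exact r2.add hr hf1 (hd2 c hc) hadj hrN (by rw [hfr, hfc, hj]) o2
  · exact r3.add hr hf1 (hd2 c hc) hadj hrN (by rw [hfr, hfc, hj]) o3

theorem LP.single {V : Type*} {T : SimpleGraph V} (r : V) (l : Lab) :
    LP T {r} r l false false false := by
  refine ⟨fun _ => l, rfl, ?_, ?_, ?_, ?_, ?_⟩ <;> simp [Slot]

/-- A complete labelling of the whole tree. -/
def Good {V : Type*} (T : SimpleGraph V) (f : V → Lab) : Prop :=
  (∀ u v, T.Adj u v → slot (f u) (f v) ≠ 0) ∧
  ∀ v i, 1 ≤ i → i ≤ nreq (f v) → ∃! u, T.Adj v u ∧ slot (f v) (f u) = i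

theorem LP.final {V : Type*} [Fintype V] {T : SimpleGraph V} {r : V} {l : Lab} {b1 b2 b3 : Bool}
    (h : LP T Finset.univ r l b1 b2 b3) (h1 : b1 = true)
    (h2 : (b2 || Nat.ble (nreq l) 1) = true) (h3 : (b3 || Nat.ble (nreq l) 2) = true) :
    ∃ f, Good T f := by
  obtain ⟨f, fr, e, n, r1, r2, r3⟩ := h
  refine ⟨f, fun u v huv => e u (Finset.mem_univ _) v (Finset.mem_univ _) huv, ?_⟩
  intro v i hi1 hi2
  have key : Slot T Finset.univ f v i true := by
    by_cases hvr : v = r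
    · subst hvr
      have h4 := nreq_le (f v)
      rw [fr] at hi2 h4
      have hi : i = 1 ∨ i = 2 ∨ i = 3 := by omega
      rcases hi with rfl | rfl | rfl
      · rw [h1] at r1; exact r1
      · have : Nat.ble (nreq l) 1 = false := by
          rw [← Bool.not_eq_true, Nat.ble_eq]; omega
        rw [this, Bool.or_false] at h2
        rw [h2] at r2; exact r2
      · have : Nat.ble (nreq l) 2 = false := by
          rw [← Bool.not_eq_true, Nat.ble_eq]; omega
        rw [this, Bool.or_false] at h3
        rw [h3] at r3; exact r3
    · exact n v (Finset.mem_univ _) hvr i hi1 hi2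
  simpa using key.1 rfl

/-- Root states of partial NTD-sets. -/
def nst : ℕ → Bool × Bool × Bool × Bool
  | 0 => (true, false, true, true)
  | 1 => (true, true, false, true)
  | 2 => (true, true, true, true)
  | 3 => (false, true, false, false)
  | 4 => (false, true, false, true)
  | 5 => (false, true, true, false)
  | _ => (false, true, true, true)

/-- Root states of partial labellings. -/
def rst : ℕ → Lab × Bool × Bool × Bool
  | 0 => (Lab.X0, false, false, false)
  | 1 => (Lab.X0, true, false, false)
  | 2 => (Lab.X1, false, false, false)
  | 3 => (Lab.X1, true, false, false)
  | 4 => (Lab.U, false, false, false)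
  | 5 => (Lab.U, true, false, false)
  | 6 => (Lab.C, false, false, false)
  | 7 => (Lab.C, true, false, false)
  | 8 => (Lab.C, false, true, false)
  | 9 => (Lab.C, true, true, false)
  | 10 => (Lab.C, false, false, true)
  | 11 => (Lab.C, true, false, true)
  | 12 => (Lab.C, false, true, true)
  | 13 => (Lab.C, true, true, true)
  | 14 => (Lab.D0, false, false, false)
  | 15 => (Lab.D0, true, false, false)
  | 16 => (Lab.D1, false, false, false)
  | 17 => (Lab.D1, true, false, false)
  | 18 => (Lab.A, false, false, false)
  | 19 => (Lab.A, true, false, false)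
  | 20 => (Lab.A, false, true, false)
  | 21 => (Lab.A, true, true, false)
  | 22 => (Lab.B, false, false, false)
  | _ => (Lab.B, true, false, false)

/-- The classes of rooted trees: parity of the order, available partial NTD-sets (state and
excess plus three), available partial labellings. -/
def cls : List (Bool × List (ℕ × ℕ) × List ℕ) :=
  [(true, [(0, 4), (1, 4), (3, 2)], [0, 2, 4, 6, 14, 16, 18, 22]),
   (false, [(0, 5), (1, 3), (2, 5), (5, 3)], [1, 5, 7, 8, 10, 20]),
   (true, [(1, 2), (2, 4), (5, 4)], [9, 11, 12]),
   (true, [(0, 4), (1, 4), (2, 2), (6, 4)], []),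
   (true, [(0, 4), (1, 4), (2, 4), (4, 2), (6, 4)], [0, 2, 4, 16]),
   (true, [(0, 4), (1, 4), (2, 4), (4, 2), (6, 2)], [0, 2]),
   (false, [(1, 1), (2, 3), (5, 5)], [13]),
   (true, [(1, 2), (2, 2), (6, 4)], []),
   (false, [(0, 5), (1, 3), (2, 3), (6, 3)], [1]),
   (true, [(0, 4), (1, 4), (2, 4), (4, 2), (5, 2), (6, 4)], [0, 2, 19]),
   (false, [(0, 3), (1, 3), (2, 5), (4, 3), (5, 3), (6, 3)], [1, 5, 7, 10]),
   (false, [(0, 3), (1, 3), (2, 5), (4, 1), (5, 3), (6, 3)], [5, 7]),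
   (false, [(0, 3), (1, 5), (2, 3), (4, 3), (6, 1)], []),
   (true, [(0, 4), (1, 2), (2, 4), (5, 4), (6, 2)], [9, 11]),
   (true, [(0, 2), (1, 2), (2, 4), (4, 4), (5, 4), (6, 4)], [11]),
   (false, [(0, 3), (1, 3), (2, 3), (4, 1), (6, 3)], [5]),
   (true, [(0, 2), (2, 2), (4, 4), (6, 4)], []),
   (false, [(0, 3), (1, 5), (2, 3), (4, 3), (6, 3)], [3]),
   (true, [(1, 0), (2, 2)], []),
   (true, [(0, 2), (1, 2), (2, 4), (4, 2), (5, 2), (6, 4)], [19]),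
   (false, [(0, 3), (1, 5), (2, 3), (4, 3), (5, 1), (6, 3)], [15]),
   (false, [(0, 3), (1, 1), (2, 3), (5, 3), (6, 3)], [21]),
   (false, [(0, 3), (1, 3), (2, 3), (4, 1), (6, 3)], [17]),
   (true, [(0, 2), (1, 2), (2, 4), (4, 0), (5, 4), (6, 2)], []),
   (false, [(0, 3), (1, 1), (2, 3), (5, 5), (6, 1)], []),
   (false, [(0, 1), (1, 1), (2, 3), (4, 5), (5, 5), (6, 5)], []),
   (false, [(2, 1)], []),
   (true, [(2, 0)], []),
   (false, [(0, 3), (1, 3), (2, 3), (4, 1), (5, 1), (6, 3)], [23]),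
   (true, [(0, 4), (1, 2), (2, 4), (4, 0), (5, 2), (6, 2)], []),
   (true, [(0, 2), (2, 2), (6, 0)], []),
   (false, [(0, 5), (1, 1), (2, 3), (5, 3), (6, 1)], [])]

/-- Joining two partial NTD-set states gives a third one. -/
def nOk (x y z : Bool × Bool × Bool × Bool) : Bool :=
  (y.2.2.1 || x.1) && (y.2.2.2 || x.2.1) && (x.1 == z.1) && (x.2.1 == z.2.1) &&
    ((x.2.2.1 || y.1) == z.2.2.1) && ((x.2.2.2 || y.2.1) == z.2.2.2)

/-- Joining two partial labelling states gives a third one. -/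
def rOk (x y z : Lab × Bool × Bool × Bool) : Bool :=
  !(slot x.1 y.1 == 0) && !(slot y.1 x.1 == 0) && decide (x.1 = z.1) &&
    childOk y.1 (slot y.1 x.1) y.2.1 y.2.2.1 y.2.2.2 &&
    addOk (slot x.1 y.1) 1 x.2.1 && addOk (slot x.1 y.1) 2 x.2.2.1 &&
    addOk (slot x.1 y.1) 3 x.2.2.2 &&
    ((x.2.1 || (slot x.1 y.1 == 1)) == z.2.1) && ((x.2.2.1 || (slot x.1 y.1 == 2)) == z.2.2.1) &&
    ((x.2.2.2 || (slot x.1 y.1 == 3)) == z.2.2.2)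

/-- Joining trees of two classes gives a tree of the third class. -/
def checkPair (c1 c2 d : Bool × List (ℕ × ℕ) × List ℕ) : Bool :=
  (d.1 == (c1.1 ^^ c2.1)) &&
  (d.2.1.all fun k => c1.2.1.any fun i => c2.2.1.any fun j =>
    Nat.ble (i.2 + j.2) (k.2 + 3) && nOk (nst i.1) (nst j.1) (nst k.1)) &&
  (d.2.2.all fun k => c1.2.2.any fun i => c2.2.2.any fun j => rOk (rst i) (rst j) (rst k))

/-- Index of a class of the join of trees of two classes. -/
def joinTab : List (List ℕ) :=
  [[1, 4, 17, 12, 10, 11, 16, 12, 5, 11, 9, 19, 23, 22, 20, 19, 12, 5, 26, 28, 29, 3, 19, 25, 3,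
    16, 30, 26, 23, 25, 12, 3],
   [2, 8, 3, 3, 2, 13, 26, 3, 8, 13, 8, 21, 24, 3, 3, 21, 3, 8, 27, 3, 31, 26, 21, 3, 24, 26, 26,
    27, 24, 3, 3, 24],
   [6, 7, 26, 26, 6, 6, 27, 26, 7, 6, 7, 7, 7, 26, 26, 7, 26, 7, 26, 26, 7, 7, 7, 26, 7, 27, 27,
    26, 7, 26, 26, 7],
   [26, 3, 26, 26, 26, 26, 27, 26, 3, 26, 3, 3, 3, 26, 26, 3, 26, 3, 26, 26, 3, 3, 3, 26, 3, 27,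
    27, 26, 3, 26, 26, 3],
   [8, 4, 17, 12, 8, 15, 16, 12, 5, 15, 5, 3, 3, 22, 12, 3, 12, 5, 26, 12, 3, 3, 3, 12, 3, 16,
    30, 26, 3, 26, 12, 3],
   [8, 5, 17, 12, 8, 12, 16, 12, 5, 12, 5, 3, 3, 12, 12, 3, 12, 5, 26, 12, 3, 3, 3, 12, 3, 16,
    30, 26, 3, 12, 12, 3],
   [18, 26, 27, 7, 18, 7, 26, 7, 26, 7, 26, 26, 26, 7, 27, 26, 7, 26, 27, 7, 26, 26, 26, 7, 26,
    26, 26, 27, 26, 7, 7, 26],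
   [26, 7, 26, 26, 26, 26, 27, 26, 7, 26, 7, 7, 7, 26, 26, 7, 26, 7, 26, 26, 7, 7, 7, 26, 7, 27,
    27, 26, 7, 26, 26, 7],
   [7, 8, 3, 3, 3, 3, 26, 3, 8, 3, 8, 26, 26, 3, 3, 26, 3, 8, 27, 3, 26, 26, 26, 3, 26, 26, 26,
    27, 26, 3, 3, 26],
   [8, 5, 17, 12, 8, 12, 16, 12, 5, 12, 5, 3, 3, 12, 12, 3, 12, 5, 26, 12, 3, 3, 3, 12, 3, 16,
    30, 26, 3, 12, 12, 3],
   [2, 8, 3, 3, 14, 14, 26, 3, 8, 14, 8, 25, 12, 3, 3, 25, 3, 8, 27, 3, 12, 26, 25, 3, 12, 26,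
    26, 27, 12, 3, 3, 12],
   [13, 15, 3, 3, 14, 23, 12, 3, 12, 23, 12, 12, 12, 3, 3, 12, 3, 12, 27, 3, 12, 12, 12, 3, 12,
    12, 26, 27, 12, 3, 3, 12],
   [3, 12, 16, 16, 3, 3, 26, 16, 12, 3, 12, 12, 12, 3, 16, 12, 16, 12, 27, 3, 12, 12, 12, 3, 12,
    26, 26, 27, 12, 3, 3, 12],
   [6, 3, 26, 26, 6, 24, 3, 26, 3, 24, 3, 3, 3, 24, 26, 3, 26, 3, 26, 24, 3, 3, 3, 24, 3, 3, 27,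
    26, 3, 24, 24, 3],
   [6, 3, 26, 26, 25, 25, 3, 26, 3, 25, 3, 3, 3, 25, 26, 3, 26, 3, 26, 25, 3, 3, 3, 25, 3, 3, 27,
    26, 3, 25, 12, 3],
   [3, 15, 3, 3, 3, 3, 12, 3, 12, 3, 12, 12, 12, 3, 3, 12, 3, 12, 27, 3, 12, 12, 12, 3, 12, 12,
    26, 27, 12, 3, 3, 12],
   [26, 16, 26, 26, 26, 26, 27, 26, 16, 26, 16, 16, 16, 26, 26, 16, 26, 16, 26, 26, 16, 16, 16,
    26, 16, 27, 27, 26, 16, 26, 26, 16],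
   [3, 17, 16, 16, 3, 3, 26, 16, 17, 3, 17, 26, 12, 3, 16, 26, 16, 17, 27, 3, 12, 26, 26, 3, 12,
    26, 26, 27, 12, 3, 3, 12],
   [26, 18, 26, 26, 26, 26, 27, 26, 18, 26, 18, 18, 18, 26, 26, 18, 26, 18, 26, 26, 18, 18, 18,
    26, 18, 27, 27, 26, 18, 26, 26, 18],
   [21, 3, 26, 12, 25, 12, 3, 12, 3, 12, 3, 3, 3, 12, 12, 3, 12, 3, 26, 12, 3, 3, 3, 12, 3, 3,
    27, 26, 3, 12, 12, 3],
   [3, 12, 16, 16, 3, 3, 26, 16, 12, 3, 12, 12, 12, 3, 16, 12, 16, 12, 27, 3, 12, 12, 12, 3, 12,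
    26, 26, 27, 12, 3, 3, 12],
   [3, 26, 3, 3, 3, 3, 26, 3, 26, 3, 26, 26, 24, 3, 3, 26, 3, 26, 27, 3, 24, 26, 26, 3, 24, 26,
    26, 27, 24, 3, 3, 24],
   [3, 22, 3, 3, 3, 3, 12, 3, 12, 3, 12, 12, 12, 3, 3, 12, 3, 12, 27, 3, 12, 12, 12, 3, 12, 12,
    26, 27, 12, 3, 3, 12],
   [24, 3, 12, 12, 12, 12, 3, 12, 3, 12, 3, 3, 3, 12, 12, 3, 12, 3, 26, 12, 3, 3, 3, 12, 3, 3,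
    27, 26, 3, 12, 12, 3],
   [3, 26, 3, 3, 3, 3, 26, 3, 26, 3, 24, 24, 24, 3, 3, 24, 3, 24, 27, 3, 24, 24, 24, 3, 24, 26,
    26, 27, 24, 3, 3, 26],
   [18, 26, 27, 3, 18, 3, 26, 3, 26, 3, 25, 25, 25, 3, 3, 25, 3, 25, 27, 3, 25, 25, 25, 3, 25,
    26, 26, 27, 25, 3, 3, 26],
   [27, 26, 27, 27, 27, 27, 26, 27, 26, 27, 26, 26, 26, 27, 27, 26, 27, 26, 27, 27, 26, 26, 26,
    27, 26, 26, 26, 27, 26, 27, 27, 26],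
   [26, 27, 26, 26, 26, 26, 27, 26, 27, 26, 27, 27, 27, 26, 26, 27, 26, 27, 26, 26, 27, 27, 27,
    26, 27, 27, 27, 26, 27, 26, 26, 27],
   [3, 12, 3, 3, 3, 3, 12, 3, 12, 3, 12, 12, 12, 3, 3, 12, 3, 12, 27, 3, 12, 12, 12, 3, 12, 12,
    26, 27, 12, 3, 3, 12],
   [31, 3, 12, 12, 12, 12, 3, 12, 3, 12, 3, 3, 3, 12, 12, 3, 12, 3, 26, 12, 3, 3, 3, 12, 3, 3,
    27, 26, 3, 12, 12, 3],
   [26, 30, 26, 26, 26, 26, 27, 26, 30, 26, 30, 27, 27, 26, 26, 27, 26, 30, 26, 26, 27, 27, 27,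
    26, 27, 27, 27, 26, 27, 26, 26, 27],
   [7, 26, 3, 3, 3, 3, 26, 3, 26, 3, 26, 24, 24, 3, 3, 24, 3, 26, 27, 3, 26, 24, 24, 3, 24, 26,
    26, 27, 24, 3, 3, 24]]

/-- The class with index `j` of the table is a class of the join. -/
def checkAt (c1 c2 : Bool × List (ℕ × ℕ) × List ℕ) (j : ℕ) : Bool :=
  match cls[j]? with
  | some d => checkPair c1 c2 d
  | none => false

/-- Check a list of classes along a row of the table. -/
def checkRow (c1 : Bool × List (ℕ × ℕ) × List ℕ) :
    List (Bool × List (ℕ × ℕ) × List ℕ) → List ℕ → Bool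
  | [], _ => true
  | _ :: _, [] => false
  | c2 :: l, j :: r => checkAt c1 c2 j && checkRow c1 l r

/-- Check a list of classes along the rows of the table. -/
def checkRows : List (Bool × List (ℕ × ℕ) × List ℕ) → List (List ℕ) → Bool
  | [], _ => true
  | _ :: _, [] => false
  | c1 :: l, r :: t => checkRow c1 cls r && checkRows l t

theorem checkRow_spec {c1 c2 : Bool × List (ℕ × ℕ) × List ℕ} :
    ∀ {l : List (Bool × List (ℕ × ℕ) × List ℕ)} {r : List ℕ}, checkRow c1 l r = true → c2 ∈ l →
      ∃ d ∈ cls, checkPair c1 c2 d = true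
  | [], _, _, h => absurd h (by simp)
  | _ :: _, [], h, _ => absurd h (by simp [checkRow])
  | c :: l, j :: r, h, hm => by
    rw [checkRow, Bool.and_eq_true] at h
    rcases List.mem_cons.1 hm with rfl | hm
    · have h1 := h.1
      unfold checkAt at h1
      split at h1
      · next d hd => exact ⟨d, List.mem_of_getElem? hd, h1⟩
      · exact absurd h1 (by simp)
    · exact checkRow_spec h.2 hm

theorem checkRows_spec {c1 c2 : Bool × List (ℕ × ℕ) × List ℕ} (h2 : c2 ∈ cls) :
    ∀ {l : List (Bool × List (ℕ × ℕ) × List ℕ)} {t : List (List ℕ)}, checkRows l t = true →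
      c1 ∈ l → ∃ d ∈ cls, checkPair c1 c2 d = true
  | [], _, _, h => absurd h (by simp)
  | _ :: _, [], h, _ => absurd h (by simp [checkRows])
  | c :: l, r :: t, h, hm => by
    rw [checkRows, Bool.and_eq_true] at h
    rcases List.mem_cons.1 hm with rfl | hm
    · exact checkRow_spec h.1 h2
    · exact checkRows_spec h2 h.2 hm

/-- A class contains the one-vertex tree. -/
def singleOk (c : Bool × List (ℕ × ℕ) × List ℕ) : Bool :=
  c.1 && (c.2.1.all fun p => ((nst p.1).1 || (nst p.1).2.1) && !((nst p.1).2.2.1 && (nst p.1).2.1) &&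
    (!(nst p.1).2.2.2 || (nst p.1).1) && Nat.ble (2 * (if (nst p.1).1 then 1 else 0) + 2) p.2) &&
  (c.2.2.all fun q => !(rst q).2.1 && !(rst q).2.2.1 && !(rst q).2.2.2)

/-- Trees of the class satisfy the theorem. -/
def finalOk (c : Bool × List (ℕ × ℕ) × List ℕ) : Bool :=
  c.1 || (c.2.1.any fun p => (nst p.1).2.2.1 && (nst p.1).2.2.2 && Nat.ble (p.2 + 1) 3) ||
  (c.2.2.any fun q => (rst q).2.1 && ((rst q).2.2.1 || Nat.ble (nreq (rst q).1) 1) &&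
    ((rst q).2.2.2 || Nat.ble (nreq (rst q).1) 2))

theorem checkAll_true : checkRows cls joinTab = true := by decide +kernel

theorem single_true : cls.any singleOk = true := by decide +kernel

theorem final_true : cls.all finalOk = true := by decide +kernel

/-- The rooted piece `(W, r)` belongs to class `c`. -/
def Inv {V : Type*} (T : SimpleGraph V) (W : Finset V) (r : V)
    (c : Bool × List (ℕ × ℕ) × List ℕ) : Prop :=
  (c.1 = true ↔ Odd W.card) ∧
  (∀ p ∈ c.2.1, NP T W r (nst p.1).1 (nst p.1).2.1 (nst p.1).2.2.1 (nst p.1).2.2.2 p.2) ∧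
  (∀ q ∈ c.2.2, LP T W r (rst q).1 (rst q).2.1 (rst q).2.2.1 (rst q).2.2.2)

theorem inv_single {V : Type*} (T : SimpleGraph V) (r : V) (c : Bool × List (ℕ × ℕ) × List ℕ)
    (h : singleOk c = true) : Inv T {r} r c := by
  simp only [singleOk, Bool.and_eq_true, List.all_eq_true] at h
  obtain ⟨⟨h1, h2⟩, h3⟩ := h
  refine ⟨by simp [h1], ?_, ?_⟩
  · intro p hp
    obtain ⟨⟨⟨k1, k2⟩, k3⟩, k4⟩ := h2 p hp
    refine NP.single r _ _ _ _ _ k1 ?_ ?_ (by simpa using k4)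
    · intro h; rw [h] at k2; simpa using k2
    · intro h; rw [h] at k3; simpa using k3
  · intro q hq
    obtain ⟨⟨k1, k2⟩, k3⟩ := h3 q hq
    have e1 : (rst q).2.1 = false := by simpa using k1
    have e2 : (rst q).2.2.1 = false := by simpa using k2
    have e3 : (rst q).2.2.2 = false := by simpa using k3
    rw [e1, e2, e3]
    exact LP.single r _

open Classical in
theorem inv_join {V : Type*} {T : SimpleGraph V} {W1 W2 : Finset V} {r c : V}
    {c1 c2 d : Bool × List (ℕ × ℕ) × List ℕ} (h1 : Inv T W1 r c1) (h2 : Inv T W2 c c2)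
    (hr : r ∈ W1) (hc : c ∈ W2)
    (hd : Disjoint W1 W2) (hadj : T.Adj r c)
    (hcut : ∀ a ∈ W1, ∀ b ∈ W2, T.Adj a b → a = r ∧ b = c) (h : checkPair c1 c2 d = true) :
    Inv T (W1 ∪ W2) r d := by
  simp only [checkPair, Bool.and_eq_true, List.all_eq_true, List.any_eq_true, beq_iff_eq] at h
  obtain ⟨⟨k1, k2⟩, k3⟩ := h
  refine ⟨?_, ?_, ?_⟩
  · rw [Finset.card_union_of_disjoint hd, Nat.odd_add, ← h1.1, ← Nat.not_odd_iff_even, ← h2.1, k1]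
    cases c1.1 <;> cases c2.1 <;> simp
  · intro p hp
    obtain ⟨i, hi, j, hj, hle, hok⟩ := k2 p hp
    simp only [nOk, Bool.and_eq_true, beq_iff_eq] at hok
    obtain ⟨⟨⟨⟨⟨o1, o2⟩, o3⟩, o4⟩, o5⟩, o6⟩ := hok
    rw [← o3, ← o4, ← o5, ← o6]
    exact (h1.2.1 i hi).join (h2.2.1 j hj) hr hc hd hadj o1 o2 (Nat.ble_eq.mp hle)
  · intro q hq
    obtain ⟨i, hi, j, hj, hok⟩ := k3 q hq
    simp only [rOk, Bool.and_eq_true, beq_iff_eq, decide_eq_true_eq] at hok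
    obtain ⟨⟨⟨⟨⟨⟨⟨⟨⟨o1, o2⟩, o3⟩, o4⟩, o5⟩, o6⟩, o7⟩, o8⟩, o9⟩, o10⟩ := hok
    rw [← o3, ← o8, ← o9, ← o10]
    exact (h1.2.2 i hi).join (h2.2.2 j hj) hr hc hd hadj hcut _ _ rfl rfl (by simpa using o1)
      (by simpa using o2) o4 o5 o6 o7

theorem exists_inv {V : Type*} {T : SimpleGraph V} {W : Finset V} {r : V} (h : Built T W r) :
    ∃ c ∈ cls, Inv T W r c := by
  induction h with
  | single r =>
    obtain ⟨c, hc, h⟩ := List.any_eq_true.1 single_true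
    exact ⟨c, hc, inv_single T r c h⟩
  | join W1 W2 r c hb1 hb2 hd hadj hcut ih1 ih2 =>
    obtain ⟨c1, hc1, i1⟩ := ih1
    obtain ⟨c2, hc2, i2⟩ := ih2
    obtain ⟨d, hd', hok⟩ := checkRows_spec hc2 checkAll_true hc1
    exact ⟨d, hd', inv_join i1 i2 hb1.mem hb2.mem hd hadj hcut hok⟩

theorem exists_good {V : Type*} [Fintype V] (T : SimpleGraph V) (hT : T.IsTree)
    (h : 2 * ntdNum T = Fintype.card V) : ∃ f, Good T f := by
  obtain ⟨r⟩ := hT.1.nonempty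
  obtain ⟨c, hc, h1, h2, h3⟩ := exists_inv (built_univ hT r)
  have hf := List.all_eq_true.1 final_true c hc
  simp only [finalOk, Bool.or_eq_true, List.any_eq_true] at hf
  rcases hf with (hf | ⟨p, hp, hf⟩) | ⟨q, hq, hf⟩
  · have := h1.1 hf
    rw [Finset.card_univ, ← h] at this
    obtain ⟨k, hk⟩ := this
    omega
  · simp only [Bool.and_eq_true] at hf
    obtain ⟨⟨e1, e2⟩, e3⟩ := hf
    have := h2 p hp
    rw [e1, e2] at this
    have h4 := this.final (by have := Nat.ble_eq.mp e3; omega)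
    omega
  · rw [Bool.and_eq_true, Bool.and_eq_true] at hf
    exact (h3 q hq).final hf.1.1 hf.1.2 hf.2

section Abstract

variable {α : Type*} {T0 : SimpleGraph α} {unit : α → Bool} {k : BaseVerts unit → ℕ}

theorem base_ll (x y : α) : (baseTree T0 unit).Adj (Sum.inl x) (Sum.inl y) ↔ T0.Adj x y := by
  simp only [baseTree, fromRel_adj]
  constructor
  · rintro ⟨_, h | h⟩ <;> simp at h
    · exact h
    · exact h.symm
  · intro h
    exact ⟨by simpa using h.ne, Or.inl (Or.inl ⟨x, y, rfl, rfl, h⟩)⟩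

theorem base_lr (x : α) (u : UnitVerts unit) :
    (baseTree T0 unit).Adj (Sum.inl x) (Sum.inr u) ↔ u.1.1 = x ∧ u.1.2 = 0 := by
  simp [baseTree, fromRel_adj]
  exact fun _ => eq_comm

theorem base_rl (x : α) (u : UnitVerts unit) :
    (baseTree T0 unit).Adj (Sum.inr u) (Sum.inl x) ↔ u.1.1 = x ∧ u.1.2 = 0 := by
  rw [adj_comm, base_lr]

theorem base_rr (u w : UnitVerts unit) :
    (baseTree T0 unit).Adj (Sum.inr u) (Sum.inr w) ↔
      u.1.1 = w.1.1 ∧ (u.1.2 = 0 ∧ w.1.2 ≠ 0 ∨ w.1.2 = 0 ∧ u.1.2 ≠ 0) := by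
  simp only [baseTree, fromRel_adj]
  constructor
  · rintro ⟨_, h | h⟩ <;> simp at h
    · exact ⟨h.1, Or.inl h.2⟩
    · exact ⟨h.1.symm, Or.inr h.2⟩
  · rintro ⟨h, h' | h'⟩
    · refine ⟨?_, Or.inl (Or.inr (Or.inr ⟨u, w, rfl, rfl, h, h'.1, h'.2⟩))⟩
      intro e
      have e := Sum.inr.inj e
      subst e
      exact h'.2 h'.1
    · refine ⟨?_, Or.inr (Or.inr (Or.inr ⟨w, u, rfl, rfl, h.symm, h'.1, h'.2⟩))⟩
      intro e
      have e := Sum.inr.inj e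
      subst e
      exact h'.2 h'.1

theorem full_ll (v w : BaseVerts unit) :
    (fullTree T0 unit k).Adj (Sum.inl v) (Sum.inl w) ↔ (baseTree T0 unit).Adj v w := by
  simp only [fullTree, fromRel_adj]
  constructor
  · rintro ⟨_, (⟨a, b, h1, h2, h⟩ | ⟨a, b, h1, h2, h⟩ | ⟨a, b, h1, h2, h⟩) |
      (⟨a, b, h1, h2, h⟩ | ⟨a, b, h1, h2, h⟩ | ⟨a, b, h1, h2, h⟩)⟩
    · rw [Sum.inl.inj h1, Sum.inl.inj h2]; exact h
    · cases h2
    · cases h2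
    · rw [Sum.inl.inj h1, Sum.inl.inj h2]; exact h.symm
    · cases h2
    · cases h2
  · intro h
    exact ⟨fun e => h.ne (Sum.inl.inj e), Or.inl (Or.inl ⟨v, w, rfl, rfl, h⟩)⟩

theorem full_lr (v : BaseVerts unit) (t : AppendVerts unit k) :
    (fullTree T0 unit k).Adj (Sum.inl v) (Sum.inr t) ↔ t.1.1 = v ∧ t.1.2.2 = 0 := by
  simp [fullTree, fromRel_adj]
  exact fun _ => eq_comm

theorem full_rr_adj (t s : AppendVerts unit k) (h1 : t.1.1 = s.1.1) (h2 : t.1.2.1 = s.1.2.1)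
    (h3 : t.1.2.2 = 0) (h4 : s.1.2.2 = 1) :
    (fullTree T0 unit k).Adj (Sum.inr t) (Sum.inr s) := by
  simp only [fullTree, fromRel_adj]
  refine ⟨?_, Or.inl (Or.inr (Or.inr ⟨t, s, rfl, rfl, h1, h2, h3, h4⟩))⟩
  intro e
  have e := Sum.inr.inj e
  subst e
  rw [h3] at h4
  exact absurd h4 (by decide)

/-- Vertices to which copies of `P2` may be appended. -/
def Special (v : BaseVerts unit) : Prop :=
  ∃ u : UnitVerts unit, v = Sum.inr u ∧ (unit u.1.1 = false ∧ u.1.2 = 0 ∨ u.1.2 = 2)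

theorem special_nbr (u : UnitVerts unit) (y : BaseVerts unit)
    (hu : unit u.1.1 = false ∧ u.1.2 = 0 ∨ u.1.2 = 2)
    (h : (baseTree T0 unit).Adj (Sum.inr u) y) :
    (unit u.1.1 = false ∧ u.1.2 = 0 ∧ y = Sum.inl u.1.1) ∨
    (u.1.2 = 2 ∧ ∃ w : UnitVerts unit, y = Sum.inr w ∧ w.1.1 = u.1.1 ∧ w.1.2 = 0 ∧
      unit w.1.1 = true) := by
  have h20 : (2 : Fin 3) ≠ 0 := by decide
  rcases y with x | w
  · rw [base_rl] at h
    rcases hu with ⟨hu, hu'⟩ | hu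
    · exact Or.inl ⟨hu, hu', by rw [h.1]⟩
    · exact absurd (hu.symm.trans h.2) h20
  · rw [base_rr] at h
    rcases hu with ⟨hu, hu'⟩ | hu
    · exfalso
      have hw : w.1.2 ≠ 0 := by
        rcases h.2 with h' | h'
        · exact h'.2
        · exact absurd hu' h'.2
      rcases w.2 with h' | h'
      · rw [← h.1, hu] at h'
        exact absurd h' (by simp)
      · exact hw h'
    · have hne : u.1.2 ≠ 0 := by rw [hu]; exact h20
      refine Or.inr ⟨hu, w, rfl, h.1.symm, ?_, ?_⟩
      · rcases h.2 with h' | h'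
        · exact absurd h'.1 hne
        · exact h'.1
      · rw [← h.1]
        exact u.2.resolve_right hne

theorem special_leaf (v : BaseVerts unit) (hv : Special v) :
    IsLeafVertex (baseTree T0 unit) v := by
  obtain ⟨u, rfl, hu⟩ := hv
  have h20 : (2 : Fin 3) ≠ 0 := by decide
  rcases id hu with hu' | hu'
  · refine ⟨Sum.inl u.1.1, (base_rl _ _).2 ⟨rfl, hu'.2⟩, ?_⟩
    intro y hy
    rcases special_nbr u y hu hy with h | h
    · exact h.2.2
    · exact absurd (h.1.symm.trans hu'.2) h20
  · have hne : u.1.2 ≠ 0 := by rw [hu']; exact h20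
    refine ⟨Sum.inr ⟨(u.1.1, 0), Or.inr rfl⟩, (base_rr _ _).2 ⟨rfl, Or.inr ⟨rfl, hne⟩⟩, ?_⟩
    intro y hy
    rcases special_nbr u y hu hy with h | ⟨_, w, rfl, h1, h2, _⟩
    · exact absurd h.2.1 hne
    · congr 1
      exact Subtype.ext (Prod.ext h1 h2)

theorem base_preconnected (hT : T0.Connected) : (baseTree T0 unit).Preconnected := by
  have hom : ∀ x y, (baseTree T0 unit).Reachable (Sum.inl x) (Sum.inl y) := by
    intro x y
    let φ : T0 →g baseTree T0 unit := ⟨Sum.inl, fun {a b} h => (base_ll a b).2 h⟩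
    exact (hT.preconnected x y).map φ
  have key : ∀ v : BaseVerts unit, ∃ x, (baseTree T0 unit).Reachable v (Sum.inl x) := by
    intro v
    rcases v with x | u
    · exact ⟨x, Reachable.refl _⟩
    · refine ⟨u.1.1, ?_⟩
      by_cases hu : u.1.2 = 0
      · exact ((base_rl u.1.1 u).2 ⟨rfl, hu⟩ : (baseTree T0 unit).Adj _ _).reachable
      · have h1 : (baseTree T0 unit).Adj (Sum.inr u) (Sum.inr ⟨(u.1.1, 0), Or.inr rfl⟩) :=
          (base_rr _ _).2 ⟨rfl, Or.inr ⟨rfl, hu⟩⟩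
        have h2 : (baseTree T0 unit).Adj (Sum.inr ⟨(u.1.1, 0), Or.inr rfl⟩) (Sum.inl u.1.1) :=
          (base_rl _ _).2 ⟨rfl, rfl⟩
        exact h1.reachable.trans h2.reachable
  intro v w
  obtain ⟨x, hx⟩ := key v
  obtain ⟨y, hy⟩ := key w
  exact hx.trans ((hom x y).trans hy.symm)

theorem special_dist (hT : T0.Connected) (v w : BaseVerts unit) (hv : Special v) (hw : Special w)
    (hne : v ≠ w) : 3 ≤ (baseTree T0 unit).dist v w := by
  obtain ⟨p, hp⟩ := (base_preconnected (unit := unit) hT v w).exists_walk_length_eq_dist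
  rw [← hp]
  obtain ⟨u, rfl, hu⟩ := hv
  obtain ⟨z, rfl, hz⟩ := hw
  have h20 : (2 : Fin 3) ≠ 0 := by decide
  cases p with
  | nil => exact absurd rfl hne
  | cons h q =>
    cases q with
    | nil =>
      exfalso
      rcases special_nbr u _ hu h with h | ⟨_, w, hw, h1, h2, h3⟩
      · exact absurd h.2.2 (by simp)
      · have := Sum.inr.inj hw
        subst this
        rcases hz with hz | hz
        · rw [h3] at hz; exact absurd hz.1 (by simp)
        · exact absurd (hz.symm.trans h2) h20
    | cons h' q' =>
      cases q' with
      | nil =>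
        exfalso
        apply hne
        congr 1
        rcases special_nbr u _ hu h with h | ⟨h0, w, hw, h1, h2, h3⟩ <;>
          rcases special_nbr z _ hz h'.symm with g | ⟨g0, w', hw', g1, g2, g3⟩
        · have := h.2.2.symm.trans g.2.2
          exact Subtype.ext (Prod.ext (Sum.inl.inj this) (h.2.1.trans g.2.1.symm))
        · have := h.2.2.symm.trans hw'
          exact absurd this (by simp)
        · have := hw.symm.trans g.2.2
          exact absurd this (by simp)
        · have := Sum.inr.inj (hw.symm.trans hw')
          subst this
          exact Subtype.ext (Prod.ext (h1.symm.trans g1) (h0.trans g0.symm))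
      | cons h'' q'' =>
        simp only [Walk.length_cons]
        omega

end Abstract

section Concrete

open Classical

variable {V : Type} [Fintype V] (T : SimpleGraph V) (f : V → Lab)

/-- Labels of the vertices of `T0`. -/
def IsX (l : Lab) : Prop := l = Lab.X0 ∨ l = Lab.X1

/-- The neighbor occupying slot `i`. -/
noncomputable def nb (v : V) (i : ℕ) : V :=
  if h : ∃ u, T.Adj v u ∧ slot (f v) (f u) = i then h.choose else v

variable {T f}

theorem nb_spec (hG : Good T f) {v : V} {i : ℕ} (h1 : 1 ≤ i) (h2 : i ≤ nreq (f v)) :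
    T.Adj v (nb T f v i) ∧ slot (f v) (f (nb T f v i)) = i := by
  have h : ∃ u, T.Adj v u ∧ slot (f v) (f u) = i := (hG.2 v i h1 h2).exists
  rw [nb, dif_pos h]
  exact h.choose_spec

theorem nb_uniq (hG : Good T f) {v u : V} {i : ℕ} (h1 : 1 ≤ i) (h2 : i ≤ nreq (f v))
    (hadj : T.Adj v u) (hs : slot (f v) (f u) = i) : nb T f v i = u :=
  (hG.2 v i h1 h2).unique (nb_spec hG h1 h2) ⟨hadj, hs⟩

theorem one_le_nreq (l : Lab) : 1 ≤ nreq l := by cases l <;> simp [nreq]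

/-- Every edge outside `T0` joins a vertex to its parent. -/
theorem slot_cases (l l' : Lab) (h : slot l l' ≠ 0) (h' : slot l' l ≠ 0) :
    (IsX l ∧ IsX l') ∨ (¬ IsX l ∧ slot l l' = 1) ∨ (¬ IsX l' ∧ slot l' l = 1) := by
  cases l <;> cases l' <;> simp [slot, IsX] at h h' ⊢

theorem nb_adj (hG : Good T f) (v : V) : T.Adj v (nb T f v 1) :=
  (nb_spec hG le_rfl (one_le_nreq _)).1

theorem nb_slot (hG : Good T f) (v : V) : slot (f v) (f (nb T f v 1)) = 1 :=
  (nb_spec hG le_rfl (one_le_nreq _)).2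

/-- If `u` fills a slot of `v` and `v` plays role one for `u`, then `v` is the parent of `u`. -/
theorem nb_parent (hG : Good T f) {u v : V} (h : T.Adj u v) (hs : slot (f u) (f v) = 1) :
    nb T f u 1 = v := nb_uniq hG le_rfl (one_le_nreq _) h hs

theorem lab_X0 (hG : Good T f) {v : V} (h : f v = Lab.X0) : f (nb T f v 1) = Lab.U := by
  have := nb_slot hG v
  rw [h] at this
  generalize f (nb T f v 1) = l at this ⊢
  cases l <;> simp [slot] at this ⊢

theorem lab_X1 (hG : Good T f) {v : V} (h : f v = Lab.X1) : f (nb T f v 1) = Lab.C := by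
  have := nb_slot hG v
  rw [h] at this
  generalize f (nb T f v 1) = l at this ⊢
  cases l <;> simp [slot] at this ⊢

theorem lab_U (hG : Good T f) {v : V} (h : f v = Lab.U) : f (nb T f v 1) = Lab.X0 := by
  have := nb_slot hG v
  rw [h] at this
  generalize f (nb T f v 1) = l at this ⊢
  cases l <;> simp [slot] at this ⊢

theorem lab_C (hG : Good T f) {v : V} (h : f v = Lab.C) : f (nb T f v 1) = Lab.X1 := by
  have := nb_slot hG v
  rw [h] at this
  generalize f (nb T f v 1) = l at this ⊢
  cases l <;> simp [slot] at this ⊢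

theorem lab_C2 (hG : Good T f) {v : V} (h : f v = Lab.C) :
    T.Adj v (nb T f v 2) ∧ f (nb T f v 2) = Lab.D0 := by
  obtain ⟨h1, this⟩ := nb_spec hG (v := v) (i := 2) (by norm_num) (by rw [h]; simp [nreq])
  refine ⟨h1, ?_⟩
  rw [h] at this
  generalize f (nb T f v 2) = l at this ⊢
  cases l <;> simp [slot] at this ⊢

theorem lab_C3 (hG : Good T f) {v : V} (h : f v = Lab.C) :
    T.Adj v (nb T f v 3) ∧ f (nb T f v 3) = Lab.D1 := by
  obtain ⟨h1, this⟩ := nb_spec hG (v := v) (i := 3) (by norm_num) (by rw [h]; simp [nreq])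
  refine ⟨h1, ?_⟩
  rw [h] at this
  generalize f (nb T f v 3) = l at this ⊢
  cases l <;> simp [slot] at this ⊢

theorem lab_D (hG : Good T f) {v : V} (h : f v = Lab.D0 ∨ f v = Lab.D1) :
    f (nb T f v 1) = Lab.C := by
  have := nb_slot hG v
  rcases h with h | h <;>
  · rw [h] at this
    generalize f (nb T f v 1) = l at this ⊢
    cases l <;> simp [slot] at this ⊢

theorem lab_A (hG : Good T f) {v : V} (h : f v = Lab.A) :
    f (nb T f v 1) = Lab.U ∨ f (nb T f v 1) = Lab.D1 := by
  have := nb_slot hG v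
  rw [h] at this
  generalize f (nb T f v 1) = l at this ⊢
  cases l <;> simp [slot] at this ⊢

theorem lab_A2 (hG : Good T f) {v : V} (h : f v = Lab.A) :
    T.Adj v (nb T f v 2) ∧ f (nb T f v 2) = Lab.B := by
  obtain ⟨h1, this⟩ := nb_spec hG (v := v) (i := 2) (by norm_num) (by rw [h]; simp [nreq])
  refine ⟨h1, ?_⟩
  rw [h] at this
  generalize f (nb T f v 2) = l at this ⊢
  cases l <;> simp [slot] at this ⊢

theorem lab_B (hG : Good T f) {v : V} (h : f v = Lab.B) : f (nb T f v 1) = Lab.A := by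
  have := nb_slot hG v
  rw [h] at this
  generalize f (nb T f v 1) = l at this ⊢
  cases l <;> simp [slot] at this ⊢

variable (T f)

/-- Appended neighbors of a vertex. -/
noncomputable def aset (v : V) : Finset V := Finset.univ.filter fun a => T.Adj v a ∧ f a = Lab.A

/-- Enumeration of the appended neighbors of a vertex. -/
noncomputable def en (v : V) (i : ℕ) : V :=
  if h : i < (aset T f v).card then ((aset T f v).equivFin.symm ⟨i, h⟩ : V) else v

variable {T f}

theorem mem_aset {v a : V} : a ∈ aset T f v ↔ T.Adj v a ∧ f a = Lab.A := by simp [aset]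

theorem en_mem {v : V} {i : ℕ} (h : i < (aset T f v).card) : T.Adj v (en T f v i) ∧ f (en T f v i) = Lab.A := by
  rw [en, dif_pos h, ← mem_aset]
  exact Subtype.property _

theorem en_inj {v : V} {i j : ℕ} (hi : i < (aset T f v).card) (hj : j < (aset T f v).card)
    (h : en T f v i = en T f v j) : i = j := by
  rw [en, dif_pos hi, en, dif_pos hj] at h
  have := (aset T f v).equivFin.symm.injective (Subtype.ext h)
  simpa using this

theorem en_surj {v a : V} (h1 : T.Adj v a) (h2 : f a = Lab.A) :
    ∃ i, i < (aset T f v).card ∧ en T f v i = a := by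
  let a' : aset T f v := ⟨a, mem_aset.2 ⟨h1, h2⟩⟩
  refine ⟨((aset T f v).equivFin a').1, ((aset T f v).equivFin a').2, ?_⟩
  rw [en, dif_pos ((aset T f v).equivFin a').2]
  simp [a']

variable (T f)

/-- Vertices of `T0`. -/
abbrev AA : Type := {x : V // IsX (f x)}

/-- The tree `T0`. -/
def TT : SimpleGraph (AA f) := T.comap Subtype.val

/-- The kind of the unit at a vertex of `T0`. -/
noncomputable def un (x : AA f) : Bool := decide (f x.1 = Lab.X1)

/-- Unit vertices as vertices of `T`. -/
noncomputable def ub (u : UnitVerts (un f)) : V :=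
  if u.1.2 = 0 then nb T f u.1.1.1 1 else
    if u.1.2 = 1 then nb T f (nb T f u.1.1.1 1) 2 else nb T f (nb T f u.1.1.1 1) 3

/-- Vertices of the base tree as vertices of `T`. -/
noncomputable def bv : BaseVerts (un f) → V := Sum.elim Subtype.val (ub T f)

/-- Number of appended paths. -/
noncomputable def kk (v : BaseVerts (un f)) : ℕ := (aset T f (bv T f v)).card

/-- Appended vertices as vertices of `T`. -/
noncomputable def av (t : AppendVerts (un f) (kk T f)) : V :=
  if t.1.2.2 = 0 then en T f (bv T f t.1.1) t.1.2.1 else nb T f (en T f (bv T f t.1.1) t.1.2.1) 2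

/-- The bijection between the constructed tree and `T`. -/
noncomputable def gg : FullVerts (un f) (kk T f) → V := Sum.elim (bv T f) (av T f)

variable {T f}

/-- Description of the parent and label of a unit vertex. -/
theorem ub_cases (hG : Good T f) (u : UnitVerts (un f)) :
    (u.1.2 = 0 ∧ (un f u.1.1 = false ∧ f (ub T f u) = Lab.U ∨
        un f u.1.1 = true ∧ f (ub T f u) = Lab.C) ∧ T.Adj u.1.1.1 (ub T f u) ∧
        nb T f (ub T f u) 1 = u.1.1.1) ∨
    (u.1.2 = 1 ∧ f (ub T f u) = Lab.D0 ∧ f (nb T f u.1.1.1 1) = Lab.C ∧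
        T.Adj (nb T f u.1.1.1 1) (ub T f u) ∧ nb T f (ub T f u) 1 = nb T f u.1.1.1 1) ∨
    (u.1.2 = 2 ∧ f (ub T f u) = Lab.D1 ∧ f (nb T f u.1.1.1 1) = Lab.C ∧
        T.Adj (nb T f u.1.1.1 1) (ub T f u) ∧ nb T f (ub T f u) 1 = nb T f u.1.1.1 1) := by
  obtain ⟨⟨⟨x, hx⟩, j⟩, hu⟩ := u
  have hC : un f ⟨x, hx⟩ = true → f (nb T f x 1) = Lab.C := by
    intro h
    exact lab_X1 hG (by simpa [un] using h)
  have hj : j = 0 ∨ j = 1 ∨ j = 2 := by fin_cases j <;> simp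
  rcases hj with rfl | rfl | rfl
  · left
    have e : ub T f ⟨(⟨x, hx⟩, 0), hu⟩ = nb T f x 1 := by simp [ub]
    rw [e]
    rcases id hx with h | h
    · have h' := lab_X0 hG h
      refine ⟨rfl, Or.inl ⟨by simp [un, h], h'⟩, nb_adj hG x, ?_⟩
      exact nb_parent hG (nb_adj hG x).symm (by rw [h, h']; rfl)
    · have h' := lab_X1 hG h
      refine ⟨rfl, Or.inr ⟨by simp [un, h], h'⟩, nb_adj hG x, ?_⟩
      exact nb_parent hG (nb_adj hG x).symm (by rw [h, h']; rfl)
  · right; left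
    have e : ub T f ⟨(⟨x, hx⟩, 1), hu⟩ = nb T f (nb T f x 1) 2 := by simp [ub]
    rw [e]
    have hc : f (nb T f x 1) = Lab.C := hC (hu.resolve_right (by simp))
    obtain ⟨h1, h2⟩ := lab_C2 hG hc
    exact ⟨rfl, h2, hc, h1, nb_parent hG h1.symm (by rw [h2, hc]; rfl)⟩
  · right; right
    have e : ub T f ⟨(⟨x, hx⟩, 2), hu⟩ = nb T f (nb T f x 1) 3 := by simp [ub]
    rw [e]
    have hc : f (nb T f x 1) = Lab.C := hC (hu.resolve_right (by simp))
    obtain ⟨h1, h2⟩ := lab_C3 hG hc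
    exact ⟨rfl, h2, hc, h1, nb_parent hG h1.symm (by rw [h2, hc]; rfl)⟩

theorem ub_zero (x : AA f) : ub T f ⟨(x, 0), Or.inr rfl⟩ = nb T f x.1 1 := by simp [ub]

theorem bv_not (hG : Good T f) (v : BaseVerts (un f)) :
    f (bv T f v) ≠ Lab.A ∧ f (bv T f v) ≠ Lab.B := by
  rcases v with x | u
  · have : bv T f (Sum.inl x) = x.1 := rfl
    rw [this]
    rcases x.2 with h | h <;> rw [h] <;> simp
  · have : bv T f (Sum.inr u) = ub T f u := rfl
    rw [this]
    rcases ub_cases hG u with ⟨_, h | h, _⟩ | ⟨_, h, _⟩ | ⟨_, h, _⟩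
    · rw [h.2]; simp
    · rw [h.2]; simp
    · rw [h]; simp
    · rw [h]; simp

theorem bv_inj (hG : Good T f) : Function.Injective (bv T f) := by
  have key : ∀ (x : AA f) (u : UnitVerts (un f)), x.1 ≠ ub T f u := by
    intro x u h
    have h1 := x.2
    rw [h] at h1
    rcases ub_cases hG u with ⟨_, h | h, _⟩ | ⟨_, h, _⟩ | ⟨_, h, _⟩
    · rw [h.2] at h1; simp [IsX] at h1
    · rw [h.2] at h1; simp [IsX] at h1
    · rw [h] at h1; simp [IsX] at h1
    · rw [h] at h1; simp [IsX] at h1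
  have key0 : ∀ x y : AA f, nb T f x.1 1 = nb T f y.1 1 → x = y := by
    intro x y h
    have e1 := ub_cases hG (⟨(x, 0), Or.inr rfl⟩ : UnitVerts (un f))
    have e2 := ub_cases hG (⟨(y, 0), Or.inr rfl⟩ : UnitVerts (un f))
    simp only [ub_zero] at e1 e2
    have e1 := e1.resolve_right (by simp)
    have e2 := e2.resolve_right (by simp)
    have h1 := e1.2.2.2
    rw [h, e2.2.2.2] at h1
    exact Subtype.ext h1.symm
  intro a b hab
  rcases a with x | u <;> rcases b with y | w
  · congr 1
    exact Subtype.ext hab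
  · exact absurd hab (key x w)
  · exact absurd hab.symm (key y u)
  · have hab : ub T f u = ub T f w := hab
    congr 1
    have hu := ub_cases hG u
    have hw := ub_cases hG w
    rw [← hab] at hw
    rcases hu with ⟨hu0, hu1, hu2, hu3⟩ | ⟨hu0, hu1, hu2, hu3, hu4⟩ | ⟨hu0, hu1, hu2, hu3, hu4⟩ <;>
      rcases hw with ⟨hw0, hw1, hw2, hw3⟩ | ⟨hw0, hw1, hw2, hw3, hw4⟩ | ⟨hw0, hw1, hw2, hw3, hw4⟩
    · exact Subtype.ext (Prod.ext (Subtype.ext (hu3.symm.trans hw3)) (hu0.trans hw0.symm))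
    · rw [hw1] at hu1; simp at hu1
    · rw [hw1] at hu1; simp at hu1
    · rw [hu1] at hw1; simp at hw1
    · exact Subtype.ext (Prod.ext (key0 _ _ (hu4.symm.trans hw4)) (hu0.trans hw0.symm))
    · rw [hu1] at hw1; simp at hw1
    · rw [hu1] at hw1; simp at hw1
    · rw [hu1] at hw1; simp at hw1
    · exact Subtype.ext (Prod.ext (key0 _ _ (hu4.symm.trans hw4)) (hu0.trans hw0.symm))

theorem av_cases (hG : Good T f) (t : AppendVerts (un f) (kk T f)) :
    (t.1.2.2 = 0 ∧ av T f t = en T f (bv T f t.1.1) t.1.2.1 ∧ f (av T f t) = Lab.A ∧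
      T.Adj (bv T f t.1.1) (av T f t) ∧ nb T f (av T f t) 1 = bv T f t.1.1) ∨
    (t.1.2.2 = 1 ∧ f (av T f t) = Lab.B ∧ T.Adj (en T f (bv T f t.1.1) t.1.2.1) (av T f t) ∧
      nb T f (av T f t) 1 = en T f (bv T f t.1.1) t.1.2.1) := by
  obtain ⟨⟨v, i, j⟩, ht⟩ := t
  obtain ⟨h1, h2⟩ := en_mem (T := T) (f := f) (v := bv T f v) (i := i) ht
  have hj : j = 0 ∨ j = 1 := by fin_cases j <;> simp
  rcases hj with rfl | rfl
  · left
    have e : av T f ⟨(v, i, 0), ht⟩ = en T f (bv T f v) i := by simp [av]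
    rw [e]
    refine ⟨rfl, rfl, h2, h1, nb_parent hG h1.symm ?_⟩
    have := hG.1 _ _ h1.symm
    have hb := bv_not hG v
    rw [h2] at this ⊢
    generalize f (bv T f v) = l at this hb ⊢
    cases l <;> simp [slot] at this hb ⊢
  · right
    have e : av T f ⟨(v, i, 1), ht⟩ = nb T f (en T f (bv T f v) i) 2 := by simp [av]
    rw [e]
    obtain ⟨h3, h4⟩ := lab_A2 hG h2
    exact ⟨rfl, h4, h3, nb_parent hG h3.symm (by rw [h4, h2]; rfl)⟩

theorem gg_inj (hG : Good T f) : Function.Injective (gg T f) := by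
  have key : ∀ v t, bv T f v ≠ av T f t := by
    intro v t h
    have hb := bv_not hG v
    rw [h] at hb
    rcases av_cases hG t with h | h
    · exact hb.1 h.2.2.1
    · exact hb.2 h.2.1
  intro a b hab
  rcases a with v | t <;> rcases b with w | s
  · congr 1
    exact bv_inj hG hab
  · exact absurd hab (key v s)
  · exact absurd hab.symm (key w t)
  · have hab : av T f t = av T f s := hab
    congr 1
    have hten := en_mem (T := T) (f := f) (v := bv T f t.1.1) (i := t.1.2.1) t.2
    have ht := av_cases hG t
    have hs := av_cases hG s
    rw [← hab] at hs
    have fin : t.1.1 = s.1.1 → t.1.2.2 = s.1.2.2 →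
        en T f (bv T f t.1.1) t.1.2.1 = en T f (bv T f s.1.1) s.1.2.1 → t = s := by
      intro h1 h2 h3
      have h4 : s.1.2.1 < (aset T f (bv T f t.1.1)).card := by rw [h1]; exact s.2
      rw [← h1] at h3
      exact Subtype.ext (Prod.ext h1 (Prod.ext (en_inj t.2 h4 h3) h2))
    rcases ht with ⟨t0, t1, t2, t3, t4⟩ | ⟨t0, t1, t2, t3⟩ <;>
      rcases hs with ⟨s0, s1, s2, s3, s4⟩ | ⟨s0, s1, s2, s3⟩
    · exact fin (bv_inj hG (t4.symm.trans s4)) (t0.trans s0.symm) (t1.symm.trans s1)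
    · rw [s1] at t2; simp at t2
    · rw [s2] at t1; simp at t1
    · have e := t3.symm.trans s3
      refine fin ?_ (t0.trans s0.symm) e
      have ht' := av_cases hG ⟨(t.1.1, t.1.2.1, 0), t.2⟩
      have hs' := av_cases hG ⟨(s.1.1, s.1.2.1, 0), s.2⟩
      have ht' := ht'.resolve_right (by simp)
      have hs' := hs'.resolve_right (by simp)
      have h1 := ht'.2.2.2.2
      have h2 := hs'.2.2.2.2
      rw [ht'.2.1] at h1
      rw [hs'.2.1] at h2
      simp only at h1 h2
      rw [e, h2] at h1
      exact (bv_inj hG h1).symm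

theorem surj_X {v : V} (h : IsX (f v)) : ∃ x : AA f, bv T f (Sum.inl x) = v := ⟨⟨v, h⟩, rfl⟩

theorem surj_U (hG : Good T f) {v : V} (h : f v = Lab.U ∨ f v = Lab.C) :
    ∃ x : AA f, nb T f x.1 1 = v := by
  rcases h with h | h
  · have h' := lab_U hG h
    exact ⟨⟨nb T f v 1, Or.inl h'⟩, nb_parent hG (nb_adj hG v).symm (by rw [h', h]; rfl)⟩
  · have h' := lab_C hG h
    exact ⟨⟨nb T f v 1, Or.inr h'⟩, nb_parent hG (nb_adj hG v).symm (by rw [h', h]; rfl)⟩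

theorem un_of_C (hG : Good T f) {x : AA f} (h : f (nb T f x.1 1) = Lab.C) : un f x = true := by
  rcases x.2 with h' | h'
  · rw [lab_X0 hG h'] at h; simp at h
  · simp [un, h']

theorem surj_base (hG : Good T f) {v : V} (hA : f v ≠ Lab.A) (hB : f v ≠ Lab.B) :
    ∃ w, bv T f w = v := by
  by_cases hX : IsX (f v)
  · obtain ⟨x, hx⟩ := surj_X (T := T) hX
    exact ⟨_, hx⟩
  by_cases hU : f v = Lab.U ∨ f v = Lab.C
  · obtain ⟨x, hx⟩ := surj_U hG hU
    exact ⟨Sum.inr ⟨(x, 0), Or.inr rfl⟩, (ub_zero x).trans hx⟩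
  have hD : f v = Lab.D0 ∨ f v = Lab.D1 := by
    generalize f v = l at hA hB hX hU ⊢
    cases l <;> simp [IsX] at hA hB hX hU ⊢
  have hC := lab_D hG hD
  obtain ⟨x, hx⟩ := surj_U hG (Or.inr hC)
  have hun := un_of_C hG (x := x) (by rw [hx]; exact hC)
  rcases hD with hD | hD
  · refine ⟨Sum.inr ⟨(x, 1), Or.inl hun⟩, ?_⟩
    have : bv T f (Sum.inr ⟨(x, 1), Or.inl hun⟩) = nb T f (nb T f x.1 1) 2 := by
      change ub T f ⟨(x, 1), Or.inl hun⟩ = _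
      simp [ub]
    rw [this, hx]
    exact nb_uniq hG (by norm_num) (by rw [hC]; simp [nreq]) (nb_adj hG v).symm (by rw [hC, hD]; rfl)
  · refine ⟨Sum.inr ⟨(x, 2), Or.inl hun⟩, ?_⟩
    have : bv T f (Sum.inr ⟨(x, 2), Or.inl hun⟩) = nb T f (nb T f x.1 1) 3 := by
      change ub T f ⟨(x, 2), Or.inl hun⟩ = _
      simp [ub]
    rw [this, hx]
    exact nb_uniq hG (by norm_num) (by rw [hC]; simp [nreq]) (nb_adj hG v).symm (by rw [hC, hD]; rfl)

theorem surj_A (hG : Good T f) {v : V} (hA : f v = Lab.A) :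
    ∃ (w : BaseVerts (un f)) (i : ℕ), i < kk T f w ∧ en T f (bv T f w) i = v := by
  have h := lab_A hG hA
  obtain ⟨w, hw⟩ := surj_base hG (v := nb T f v 1) (by rcases h with h | h <;> rw [h] <;> simp)
    (by rcases h with h | h <;> rw [h] <;> simp)
  obtain ⟨i, h1, h2⟩ := en_surj (nb_adj hG v).symm hA
  rw [← hw] at h1 h2
  exact ⟨w, i, h1, h2⟩

theorem gg_surj (hG : Good T f) : Function.Surjective (gg T f) := by
  intro v
  by_cases hA : f v = Lab.A
  · obtain ⟨w, i, h1, h2⟩ := surj_A hG hA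
    refine ⟨Sum.inr ⟨(w, i, 0), h1⟩, ?_⟩
    change av T f ⟨(w, i, 0), h1⟩ = v
    simpa [av] using h2
  by_cases hB : f v = Lab.B
  · have hA' := lab_B hG hB
    obtain ⟨w, i, h1, h2⟩ := surj_A hG hA'
    refine ⟨Sum.inr ⟨(w, i, 1), h1⟩, ?_⟩
    have : gg T f (Sum.inr ⟨(w, i, 1), h1⟩) = nb T f (en T f (bv T f w) i) 2 := by
      change av T f ⟨(w, i, 1), h1⟩ = _
      simp [av]
    rw [this, h2]
    exact nb_uniq hG (by norm_num) (by rw [hA']; simp [nreq]) (nb_adj hG v).symm (by rw [hA', hB]; rfl)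
  · obtain ⟨w, hw⟩ := surj_base hG hA hB
    exact ⟨Sum.inl w, hw⟩

/-- Every vertex outside `T0` is joined to its parent in the constructed tree and in `T`. -/
theorem exists_parent (hG : Good T f) (a : FullVerts (un f) (kk T f)) (h : ¬ IsX (f (gg T f a))) :
    ∃ p, gg T f p = nb T f (gg T f a) 1 ∧ (fullTree (TT T f) (un f) (kk T f)).Adj p a := by
  rcases a with (x | u) | t
  · exact absurd x.2 h
  · have e : gg T f (Sum.inl (Sum.inr u)) = ub T f u := rfl
    rw [e]
    rcases ub_cases hG u with ⟨h0, h1, h2, h3⟩ | ⟨h0, h1, h2, h3, h4⟩ | ⟨h0, h1, h2, h3, h4⟩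
    · rw [h3]
      exact ⟨Sum.inl (Sum.inl u.1.1), rfl, (full_ll _ _).2 ((base_lr _ _).2 ⟨rfl, h0⟩)⟩
    · rw [h4]
      refine ⟨Sum.inl (Sum.inr ⟨(u.1.1, 0), Or.inr rfl⟩), ub_zero _, (full_ll _ _).2 ((base_rr _ _).2
        ⟨rfl, Or.inl ⟨rfl, ?_⟩⟩)⟩
      rw [h0]; decide
    · rw [h4]
      refine ⟨Sum.inl (Sum.inr ⟨(u.1.1, 0), Or.inr rfl⟩), ub_zero _, (full_ll _ _).2 ((base_rr _ _).2
        ⟨rfl, Or.inl ⟨rfl, ?_⟩⟩)⟩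
      rw [h0]; decide
  · have e : gg T f (Sum.inr t) = av T f t := rfl
    rw [e]
    rcases av_cases hG t with ⟨h0, h1, h2, h3, h4⟩ | ⟨h0, h1, h2, h3⟩
    · rw [h4]
      exact ⟨Sum.inl t.1.1, rfl, (full_lr _ _).2 ⟨rfl, h0⟩⟩
    · rw [h3]
      refine ⟨Sum.inr ⟨(t.1.1, t.1.2.1, 0), t.2⟩, ?_, full_rr_adj _ _ rfl rfl rfl h0⟩
      change av T f ⟨(t.1.1, t.1.2.1, 0), t.2⟩ = _
      simp [av]

theorem base_adj_to (hG : Good T f) (v w : BaseVerts (un f)) (h : (baseTree (TT T f) (un f)).Adj v w) :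
    T.Adj (bv T f v) (bv T f w) := by
  have aux0 : ∀ (u : UnitVerts (un f)), u.1.2 = 0 → T.Adj u.1.1.1 (ub T f u) := by
    intro u hu
    rcases ub_cases hG u with h | h | h
    · exact h.2.2.1
    · rw [h.1] at hu; exact absurd hu (by decide)
    · rw [h.1] at hu; exact absurd hu (by decide)
  have aux1 : ∀ (u w : UnitVerts (un f)), u.1.1 = w.1.1 → u.1.2 = 0 → w.1.2 ≠ 0 →
      T.Adj (ub T f u) (ub T f w) := by
    intro u w h hu hw
    have e : ub T f u = nb T f w.1.1.1 1 := by rw [← h]; simp [ub, hu]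
    rw [e]
    rcases ub_cases hG w with h | h | h
    · exact absurd h.1 hw
    · exact h.2.2.2.1
    · exact h.2.2.2.1
  rcases v with x | u <;> rcases w with y | z
  · have h' : (TT T f).Adj x y := (base_ll x y).1 h
    exact h'
  · obtain ⟨h1, h2⟩ := (base_lr _ _).1 h
    subst h1
    exact aux0 z h2
  · obtain ⟨h1, h2⟩ := (base_rl _ _).1 h
    subst h1
    exact (aux0 u h2).symm
  · obtain ⟨h1, h2 | h2⟩ := (base_rr _ _).1 h
    · exact aux1 u z h1 h2.1 h2.2
    · exact (aux1 z u h1.symm h2.1 h2.2).symm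

theorem full_adj_to (hG : Good T f) (a b : FullVerts (un f) (kk T f))
    (h : (fullTree (TT T f) (un f) (kk T f)).Adj a b) : T.Adj (gg T f a) (gg T f b) := by
  have aux : ∀ a b : FullVerts (un f) (kk T f),
      ((∃ v w : BaseVerts (un f), a = Sum.inl v ∧ b = Sum.inl w ∧ (baseTree (TT T f) (un f)).Adj v w) ∨
      (∃ (v : BaseVerts (un f)) (t : AppendVerts (un f) (kk T f)),
        a = Sum.inl v ∧ b = Sum.inr t ∧ t.1.1 = v ∧ t.1.2.2 = 0) ∨
      (∃ t s : AppendVerts (un f) (kk T f), a = Sum.inr t ∧ b = Sum.inr s ∧ t.1.1 = s.1.1 ∧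
        t.1.2.1 = s.1.2.1 ∧ t.1.2.2 = 0 ∧ s.1.2.2 = 1)) → T.Adj (gg T f a) (gg T f b) := by
    rintro a b (⟨v, w, rfl, rfl, h⟩ | ⟨v, t, rfl, rfl, h1, h2⟩ | ⟨t, s, rfl, rfl, h1, h2, h3, h4⟩)
    · exact base_adj_to hG v w h
    · subst h1
      rcases av_cases hG t with h | h
      · exact h.2.2.2.1
      · rw [h.1] at h2; exact absurd h2 (by decide)
    · rcases av_cases hG s with h | h
      · rw [h.1] at h4; exact absurd h4 (by decide)
      · have e : gg T f (Sum.inr t) = en T f (bv T f s.1.1) s.1.2.1 := by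
          rw [← h1, ← h2]; simp [gg, av, h3]
        rw [e]
        exact h.2.2.1
  simp only [fullTree, fromRel_adj] at h
  rcases h.2 with h | h
  · exact aux a b h
  · exact (aux b a h).symm

theorem full_adj_iff (hG : Good T f) (a b : FullVerts (un f) (kk T f)) :
    T.Adj (gg T f a) (gg T f b) ↔ (fullTree (TT T f) (un f) (kk T f)).Adj a b := by
  refine ⟨fun h => ?_, full_adj_to hG a b⟩
  rcases slot_cases _ _ (hG.1 _ _ h) (hG.1 _ _ h.symm) with ⟨h1, h2⟩ | ⟨h1, h2⟩ | ⟨h1, h2⟩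
  · obtain ⟨x, hx⟩ := surj_X (T := T) h1
    obtain ⟨y, hy⟩ := surj_X (T := T) h2
    have ea : Sum.inl (Sum.inl x) = a := gg_inj hG hx
    have eb : Sum.inl (Sum.inl y) = b := gg_inj hG hy
    subst ea eb
    exact (full_ll _ _).2 ((base_ll _ _).2 h)
  · obtain ⟨p, hp, hadj⟩ := exists_parent hG a h1
    rw [nb_parent hG h h2] at hp
    rw [← gg_inj hG hp]
    exact hadj.symm
  · obtain ⟨p, hp, hadj⟩ := exists_parent hG b h1
    rw [nb_parent hG h.symm h2] at hp
    rw [← gg_inj hG hp]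
    exact hadj

theorem special_of_pos (hG : Good T f) (v : BaseVerts (un f)) (h : 0 < kk T f v) : Special v := by
  obtain ⟨a, ha⟩ := Finset.card_pos.1 h
  obtain ⟨h1, h2⟩ := mem_aset.1 ha
  have h3 := hG.1 _ _ h1
  rw [h2] at h3
  rcases v with x | u
  · exfalso
    have e : bv T f (Sum.inl x) = x.1 := rfl
    rw [e] at h3
    rcases x.2 with h | h <;> rw [h] at h3 <;> simp [slot] at h3
  · have e : bv T f (Sum.inr u) = ub T f u := rfl
    rw [e] at h3
    refine ⟨u, rfl, ?_⟩
    rcases ub_cases hG u with ⟨h0, h | h, _⟩ | ⟨_, h, _⟩ | ⟨h0, h, _⟩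
    · exact Or.inl ⟨h.1, h0⟩
    · rw [h.2] at h3; simp [slot] at h3
    · rw [h] at h3; simp [slot] at h3
    · exact Or.inr h0

theorem tt_tree (hG : Good T f) (hT : T.IsTree) : (TT T f).IsTree := by
  -- the retraction onto `T0`
  let par : V → V := fun v => if IsX (f v) then v else nb T f v 1
  have parX : ∀ v, IsX (f v) → par v = v := fun v h => by simp [par, h]
  have parN : ∀ v, ¬ IsX (f v) → par v = nb T f v 1 := fun v h => by simp [par, h]
  have p1 : ∀ v, f v = Lab.U ∨ f v = Lab.C ∨ IsX (f v) → IsX (f (par v)) := by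
    rintro v (h | h | h)
    · rw [parN v (by rw [h]; simp [IsX])]; exact Or.inl (lab_U hG h)
    · rw [parN v (by rw [h]; simp [IsX])]; exact Or.inr (lab_C hG h)
    · rw [parX v h]; exact h
  have p2 : ∀ v, f v ≠ Lab.A → f v ≠ Lab.B → IsX (f (par (par v))) := by
    intro v hA hB
    by_cases hD : f v = Lab.D0 ∨ f v = Lab.D1
    · rw [parN v (by rcases hD with h | h <;> rw [h] <;> simp [IsX])]
      exact p1 _ (Or.inr (Or.inl (lab_D hG hD)))
    · have : f v = Lab.U ∨ f v = Lab.C ∨ IsX (f v) := by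
        generalize f v = l at hA hB hD ⊢
        cases l <;> simp [IsX] at hA hB hD ⊢
      exact p1 _ (Or.inr (Or.inr (p1 v this)))
  have p3 : ∀ v, f v ≠ Lab.B → IsX (f (par (par (par v)))) := by
    intro v hB
    by_cases hA : f v = Lab.A
    · rw [parN v (by rw [hA]; simp [IsX])]
      apply p2
      · rcases lab_A hG hA with h | h <;> rw [h] <;> simp
      · rcases lab_A hG hA with h | h <;> rw [h] <;> simp
    · rw [parX _ (p2 v hA hB)]; exact p2 v hA hB
  have p4 : ∀ v, IsX (f (par (par (par (par v))))) := by
    intro v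
    by_cases hB : f v = Lab.B
    · rw [parN v (by rw [hB]; simp [IsX])]
      apply p3
      rw [lab_B hG hB]; simp
    · rw [parX _ (p3 v hB)]; exact p3 v hB
  let pr : V → AA f := fun v => ⟨par (par (par (par v))), p4 v⟩
  have prX : ∀ x : AA f, pr x.1 = x := by
    intro x
    apply Subtype.ext
    simp [pr, parX _ x.2]
  have prN : ∀ v, ¬ IsX (f v) → pr (nb T f v 1) = pr v := by
    intro v hv
    apply Subtype.ext
    simp only [pr]
    rw [← parN v hv, parX _ (p4 v)]
  have hreach : ∀ u v, T.Adj u v → (TT T f).Reachable (pr u) (pr v) := by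
    intro u v h
    rcases slot_cases _ _ (hG.1 _ _ h) (hG.1 _ _ h.symm) with ⟨h1, h2⟩ | ⟨h1, h2⟩ | ⟨h1, h2⟩
    · rw [prX ⟨u, h1⟩, prX ⟨v, h2⟩]
      exact Adj.reachable (show (TT T f).Adj ⟨u, h1⟩ ⟨v, h2⟩ from h)
    · rw [← prN u h1, nb_parent hG h h2]
    · rw [← prN v h1, nb_parent hG h.symm h2]
  have hwalk : ∀ u v, T.Walk u v → (TT T f).Reachable (pr u) (pr v) := by
    intro u v w
    induction w with
    | nil => exact Reachable.refl _
    | cons h _ ih => exact (hreach _ _ h).trans ih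
  obtain ⟨v0⟩ := hT.1.nonempty
  haveI : Nonempty (AA f) := ⟨pr v0⟩
  refine ⟨⟨?_⟩, ?_⟩
  · intro x y
    obtain ⟨w⟩ := hT.1.preconnected x.1 y.1
    have := hwalk _ _ w
    rwa [prX, prX] at this
  · exact hT.isAcyclic.comap ⟨Subtype.val, fun {a b} h => h⟩ Subtype.val_injective

theorem main_type0 (hT : T.IsTree) (hG : Good T f) :
    ∃ (α : Type) (T0 : SimpleGraph α) (unit : α → Bool) (k : BaseVerts unit → ℕ),
      T0.IsTree ∧
      (∀ v : BaseVerts unit, 0 < k v → IsLeafVertex (baseTree T0 unit) v) ∧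
      (∀ u v : BaseVerts unit, 0 < k u → 0 < k v → u ≠ v →
        3 ≤ (baseTree T0 unit).dist u v) ∧
      Nonempty (T ≃g fullTree T0 unit k) := by
  have htree := tt_tree hG hT
  refine ⟨AA f, TT T f, un f, kk T f, htree, ?_, ?_, ?_⟩
  · exact fun v hv => special_leaf v (special_of_pos hG v hv)
  · exact fun u v hu hv hne => special_dist htree.1 u v (special_of_pos hG u hu)
      (special_of_pos hG v hv) hne
  · let e : FullVerts (un f) (kk T f) ≃ V := Equiv.ofBijective (gg T f) ⟨gg_inj hG, gg_surj hG⟩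
    let φ : fullTree (TT T f) (un f) (kk T f) ≃g T := ⟨e, fun {a b} => full_adj_iff hG a b⟩
    exact ⟨φ.symm⟩

end Concrete

end NTDAux

/-- A tree `T` of order `n ≥ 4` with `2·γnt(T) = n` belongs to the family `𝒯`: it is
isomorphic to a tree built from some tree `T0` via a base tree `T1 = baseTree T0 unit` by
appending, to each vertex `v` of `T1` with `k v > 0`, `k v` copies of `P2`, where the set
`L1 = {v | k v > 0}` consists of leaves of `T1` and forms a 2-packing of `T1`. -/
theorem stmt18 {V : Type*} [Fintype V] (T : SimpleGraph V) (hT : T.IsTree)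
    (hn : 4 ≤ Fintype.card V) (h : 2 * ntdNum T = Fintype.card V) :
    ∃ (α : Type) (T0 : SimpleGraph α) (unit : α → Bool) (k : BaseVerts unit → ℕ),
      T0.IsTree ∧
      (∀ v : BaseVerts unit, 0 < k v → IsLeafVertex (baseTree T0 unit) v) ∧
      (∀ u v : BaseVerts unit, 0 < k u → 0 < k v → u ≠ v →
        3 ≤ (baseTree T0 unit).dist u v) ∧
      Nonempty (T ≃g fullTree T0 unit k) := by
  obtain ⟨f, hG⟩ := NTDAux.exists_good T hT h
  let e : Fin (Fintype.card V) ≃ V := (Fintype.equivFin V).symm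
  let T' : SimpleGraph (Fin (Fintype.card V)) := T.comap e
  let φ : T' ≃g T := ⟨e, Iff.rfl⟩
  have hT' : T'.IsTree := φ.isTree_iff.2 hT
  have hG' : NTDAux.Good T' (fun i => f (e i)) := by
    refine ⟨fun u v huv => hG.1 _ _ huv, ?_⟩
    intro v i h1 h2
    obtain ⟨u, ⟨hu1, hu2⟩, huniq⟩ := hG.2 (e v) i h1 h2
    refine ⟨e.symm u, ⟨?_, ?_⟩, ?_⟩
    · change T.Adj (e v) (e (e.symm u))
      rw [e.apply_symm_apply]; exact hu1
    · simp only [e.apply_symm_apply]; exact hu2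
    · rintro w ⟨hw1, hw2⟩
      rw [← huniq (e w) ⟨hw1, hw2⟩, e.symm_apply_apply]
  obtain ⟨α, T0, unit, k, a1, a2, a3, ⟨ψ⟩⟩ := NTDAux.main_type0 hT' hG'
  exact ⟨α, T0, unit, k, a1, a2, a3, ⟨φ.symm.trans ψ⟩⟩
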